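/- arXiv:math/9903097 — 3 statements merged into one kernel-verified Lean document; each statement's English description precedes it below -/
import Mathlib

section
/- Let F|K be an algebraic function field and P a rational discrete place of F|K, i.e., FP = K and the value group v_PF is order-isomorphic to ℤ. Then (F|K,P) is uniformizable. -/
/-! Common valuation-theoretic notions, following F.-V. Kuhlmann,
"On local uniformization in arbitrary characteristic I".

A valued field `(F, P)` is modelled by a field `F` together with a
`ValuationSubring F` (the valuation ring `𝓞` of the place `P`). -/

namespace LocalUnif

variable {F : Type*} [Field F]

/-- `x` lies in the maximal ideal of the valuation subring `O`,
i.e. the residue `xP` is `0` (equivalently `v_P x > 0`, or `x = 0`). -/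
def InMax (O : ValuationSubring F) (x : F) : Prop := x = 0 ∨ x⁻¹ ∉ O

/-- `x` is a unit of the valuation subring `O`, i.e. `v_P x = 0`. -/
def IsVUnit (O : ValuationSubring F) (x : F) : Prop := x ≠ 0 ∧ x ∈ O ∧ x⁻¹ ∈ O

/-- The valuation with valuation ring `O` is trivial on the subfield `K`;
equivalently, every nonzero element of `K` is a unit of `O`. -/
def TrivialOn (O : ValuationSubring F) (K : Subfield F) : Prop :=
  ∀ x ∈ K, x ∈ O ∧ x⁻¹ ∈ O

/-- The residue field of `O` equals (the isomorphic image of) the subfield `K`: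
every element of `O` is congruent to an element of `K` modulo the maximal ideal.
(For a place `P` of `F|K` this says that `P` is a rational place, `FP = K`.) -/
def ResidueEq (O : ValuationSubring F) (K : Subfield F) : Prop :=
  ∀ x ∈ O, ∃ c ∈ K, InMax O (x - c)

/-- The residue field of `O` is algebraic over (the image of) `K`; for a place of
`F|K` this says that `P` is zero-dimensional. -/
def ResidueAlgebraic (O : ValuationSubring F) (K : Subfield F) : Prop :=
  ∀ x ∈ O, ∃ p : Polynomial F, p ≠ 0 ∧ (∀ i, p.coeff i ∈ K) ∧ InMax O (Polynomial.eval x p)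

/-- The values `v_P (x i)` are rationally independent modulo `v_P K`:
no nontrivial ℤ-linear combination of the values lies in `ℚ ⊗ v_P K`
(equivalently, in `v_P K`, by clearing denominators). -/
def ValIndepMod (O : ValuationSubring F) (K : Subfield F) {ρ : ℕ} (x : Fin ρ → F) : Prop :=
  (∀ i, x i ≠ 0) ∧
  ∀ e : Fin ρ → ℤ, (∃ c ∈ K, c ≠ 0 ∧ IsVUnit O ((∏ i, x i ^ e i) / c)) → e = 0

/-- The residues `(y i)P` are algebraically independent over the residue field `KP`:
for every polynomial with coefficients in `𝓞_K = K ∩ O`, at least one of which is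
a unit, the value of the polynomial at `y` is a unit (so its residue is nonzero). -/
def ResIndep (O : ValuationSubring F) (K : Subfield F) {τ : ℕ} (y : Fin τ → F) : Prop :=
  (∀ i, y i ∈ O) ∧
  ∀ p : MvPolynomial (Fin τ) F, (∀ m, p.coeff m ∈ K ∧ p.coeff m ∈ O) →
    (∃ m, IsVUnit O (p.coeff m)) → ¬ InMax O (MvPolynomial.eval y p)

/-- `dim_ℚ (ℚ ⊗ (v_P F / v_P K)) = ρ`: there is a maximal set of `ρ` elements of `F`
whose values are rationally independent modulo `v_P K`. -/
def RatRankEq (O : ValuationSubring F) (K : Subfield F) (ρ : ℕ) : Prop :=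
  (∃ x : Fin ρ → F, ValIndepMod O K x) ∧ ∀ x : Fin (ρ + 1) → F, ¬ ValIndepMod O K x

/-- `trdeg (FP | KP) = τ`: there is a maximal set of `τ` elements of `O` whose
residues are algebraically independent over `KP`. -/
def ResTrdegEq (O : ValuationSubring F) (K : Subfield F) (τ : ℕ) : Prop :=
  (∃ y : Fin τ → F, ResIndep O K y) ∧ ∀ y : Fin (τ + 1) → F, ¬ ResIndep O K y

/-- `trdeg (F | K) = d`. -/
def TrdegEq (K : Subfield F) (d : ℕ) : Prop :=
  ∃ t : Fin d → F, IsTranscendenceBasis ↥K t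

/-- `P` is an Abhyankar place of `F|K`:
`trdeg F|K = trdeg FP|K + dim_ℚ (ℚ ⊗ v_P F)`. -/
def IsAbhyankar (O : ValuationSubring F) (K : Subfield F) : Prop :=
  ∃ d ρ τ : ℕ, d = ρ + τ ∧ TrdegEq K d ∧ RatRankEq O K ρ ∧ ResTrdegEq O K τ

/-- The value group of `O` is archimedean ordered (rank at most 1):
for any two positive values `v_P a, v_P b` there is `n` with `n · v_P a ≥ v_P b`. -/
def RankOne (O : ValuationSubring F) : Prop :=
  ∀ a b : F, a ≠ 0 → InMax O a → b ≠ 0 → InMax O b → ∃ n : ℕ, a ^ n / b ∈ O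

/-- The value group of `O` has (rank) at least `r`: there is a chain of `r` positive
values, each infinitely larger than the previous one. -/
def RankAtLeast (O : ValuationSubring F) (r : ℕ) : Prop :=
  ∃ a : Fin r → F, (∀ i, a i ≠ 0 ∧ InMax O (a i)) ∧
    ∀ i j : Fin r, i < j → ∀ n : ℕ, a i ^ n / a j ∉ O

/-- The value group of `O` has rank exactly `r`. -/
def RankEq (O : ValuationSubring F) (r : ℕ) : Prop :=
  RankAtLeast O r ∧ ¬ RankAtLeast O (r + 1)

/-- The valuation is discrete: its value group is order isomorphic to `ℤ`,
i.e. there is a uniformizer `π` with every value an integer multiple of `v_P π`. -/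
def IsDiscrete (O : ValuationSubring F) : Prop :=
  ∃ π : F, π ≠ 0 ∧ InMax O π ∧ ∀ x : F, x ≠ 0 → ∃ n : ℤ, IsVUnit O (x / π ^ n)

/-- `F|K` is an algebraic function field: a finitely generated field extension of
transcendence degree at least 1. -/
def IsFunctionField (K : Subfield F) : Prop :=
  (∃ S : Finset F, IntermediateField.adjoin ↥K (S : Set F) = ⊤) ∧
  ∃ x : F, Transcendental ↥K x

/-- The data of a weak uniformization of `(𝓛|𝓚, P)` (both subfields of an ambient
valued field `F`, `𝓚 ⊆ 𝓛`) with uniformizing transcendence basis `t` and generators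
`η`: there are polynomials `f i` in `n` variables `X₁, …, Xₙ` with coefficients in
`𝓞_𝓚[t₁,…,tₛ]` such that (U1) `X j` does not occur in `f i` for `i < j`,
(U2) `f i (η) = 0`, and (U3) the residue of `det J_f (η)` is nonzero; moreover `t`
is a transcendence basis of `𝓛|𝓚` inside `𝓞_𝓛` and `𝓛 = 𝓚(t, η)`. -/
def UnifData (𝓛 𝓚 : Subfield F) (O : ValuationSubring F) {s n : ℕ}
    (t : Fin s → F) (η : Fin n → F) : Prop :=
  (∀ i, t i ∈ 𝓛 ∧ t i ∈ O) ∧ (∀ i, η i ∈ 𝓛 ∧ η i ∈ O) ∧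
  AlgebraicIndependent ↥𝓚 t ∧
  (∀ z ∈ 𝓛, IsAlgebraic ↥(IntermediateField.adjoin ↥𝓚 (Set.range t)) z) ∧
  Subfield.closure ((𝓚 : Set F) ∪ Set.range t ∪ Set.range η) = 𝓛 ∧
  ∃ f : Fin n → MvPolynomial (Fin n) F,
    (∀ i m, (f i).coeff m ∈
      Subring.closure ((↑(𝓚.toSubring ⊓ O.toSubring) : Set F) ∪ Set.range t)) ∧
    (∀ i j : Fin n, (i : ℕ) < (j : ℕ) → MvPolynomial.degreeOf j (f i) = 0) ∧
    (∀ i, MvPolynomial.eval η (f i) = 0) ∧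
    IsVUnit O (Matrix.det (Matrix.of fun i j : Fin n =>
      MvPolynomial.eval η (MvPolynomial.pderiv j (f i))))

/-- `(𝓛|𝓚, P)` is uniformizable with respect to `ζ₁, …, ζ_m`:
there is a weak uniformization whose generators `η` include all the `ζ k`. -/
def UnifWrt (𝓛 𝓚 : Subfield F) (O : ValuationSubring F) {m : ℕ} (ζ : Fin m → F) : Prop :=
  ∃ (s n : ℕ) (t : Fin s → F) (η : Fin n → F),
    UnifData 𝓛 𝓚 O t η ∧ ∃ σ : Fin m → Fin n, ∀ k, η (σ k) = ζ k

/-- `(𝓛|𝓚, P)` is uniformizable: uniformizable with respect to every finite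
list of elements of `𝓞_𝓛`. -/
def UnifIn (𝓛 𝓚 : Subfield F) (O : ValuationSubring F) : Prop :=
  ∀ (m : ℕ) (ζ : Fin m → F), (∀ k, ζ k ∈ 𝓛 ∧ ζ k ∈ O) → UnifWrt 𝓛 𝓚 O ζ

section Defectless

variable {K L : Type*} [Field K] [Field L]

/-- The values of the `a i` lie in pairwise distinct cosets modulo the value group of
the ground field along `φ`; thus there are at least `e` distinct cosets. -/
def ValClassIndep (φ : K →+* L) (OL : ValuationSubring L) {e : ℕ} (a : Fin e → L) : Prop :=
  (∀ i, a i ≠ 0) ∧ ∀ i j : Fin e, i ≠ j →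
    ¬ ∃ c : K, c ≠ 0 ∧ IsVUnit OL (a i / (a j * φ c))

/-- The ramification index `e = (v_P L : v_P K)` of `OL` over the ground field along `φ`. -/
def RamIdxEq (φ : K →+* L) (OL : ValuationSubring L) (e : ℕ) : Prop :=
  (∃ a : Fin e → L, ValClassIndep φ OL a) ∧ ∀ a : Fin (e + 1) → L, ¬ ValClassIndep φ OL a

/-- The residues of the `b i` are linearly independent over the residue field of the
ground field along `φ`. -/
def ResLinIndep (φ : K →+* L) (OK : ValuationSubring K) (OL : ValuationSubring L)
    {f : ℕ} (b : Fin f → L) : Prop :=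
  (∀ i, b i ∈ OL) ∧ ∀ c : Fin f → K, (∀ i, c i ∈ OK) → (∃ i, ¬ InMax OK (c i)) →
    ¬ InMax OL (∑ i, φ (c i) * b i)

/-- The inertia degree `f = [LP : KP]` of `OL` over `(K, OK)` along `φ`. -/
def InertiaDegEq (φ : K →+* L) (OK : ValuationSubring K) (OL : ValuationSubring L)
    (f : ℕ) : Prop :=
  (∃ b : Fin f → L, ResLinIndep φ OK OL b) ∧ ∀ b : Fin (f + 1) → L, ¬ ResLinIndep φ OK OL b

end Defectless

/-- `(K, OK)` is a defectless (stable) valued field: for every finite extension `L|K`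
(inside a fixed algebraic closure) the fundamental equality
`[L : K] = ∑ᵢ eᵢ fᵢ` holds, the sum running over all extensions of the valuation. -/
def IsDefectless (K : Type*) [Field K] (OK : ValuationSubring K) : Prop :=
  ∀ L : IntermediateField K (AlgebraicClosure K), FiniteDimensional K ↥L →
    ∃ (g : ℕ) (Os : Fin g → ValuationSubring ↥L) (e f : Fin g → ℕ),
      Function.Injective Os ∧
      (∀ O' : ValuationSubring ↥L, O'.comap (algebraMap K ↥L) = OK ↔ ∃ i, O' = Os i) ∧
      (∀ i, RamIdxEq (algebraMap K ↥L) (Os i) (e i)) ∧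
      (∀ i, InertiaDegEq (algebraMap K ↥L) OK (Os i) (f i)) ∧
      Module.finrank K ↥L = ∑ i, e i * f i

/-- The extension `𝓛|𝓚` of subfields of `F` is separable (in the general sense of
MacLane): every finitely generated subextension is separably generated, i.e. admits
a separating transcendence basis. -/
def IsSeparableExt (𝓚 𝓛 : Subfield F) : Prop :=
  ∀ S : Finset F, ↑S ⊆ (𝓛 : Set F) →
    ∃ (d : ℕ) (u : Fin d → F), (∀ i, u i ∈ 𝓛) ∧ AlgebraicIndependent ↥𝓚 u ∧
      ∀ x ∈ Subfield.closure ((𝓚 : Set F) ∪ ↑S),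
        IsSeparable ↥(IntermediateField.adjoin ↥𝓚 (Set.range u)) x

/-- The embedding of a subfield `K`, on which the valuation is trivial, into
the residue field of `O`. -/
noncomputable def resEmb (O : ValuationSubring F) (K : Subfield F) (h : ∀ x ∈ K, x ∈ O) :
    ↥K →+* IsLocalRing.ResidueField ↥O :=
  (IsLocalRing.residue ↥O).comp
    { toFun := fun x => (⟨x.1, h x.1 x.2⟩ : ↥O)
      map_one' := rfl
      map_mul' := fun _ _ => rfl
      map_zero' := rfl
      map_add' := fun _ _ => rfl }

end LocalUnif


namespace LocalUnif

open Polynomial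

/-- working form of the hypotheses -/
structure Setup {F : Type*} [Field F] (K : Subfield F) (O : ValuationSubring F) (t : F) : Prop where
  ne : t ≠ 0
  tO : t ∈ O
  tinv : t⁻¹ ∉ O
  hK : ∀ x ∈ K, x ∈ O
  val : ∀ x : F, x ≠ 0 → ∃ n : ℤ, ∃ u, IsVUnit O u ∧ x = t ^ n * u
  res : ∀ x ∈ O, ∃ c ∈ K, ∃ y ∈ O, x = c + t * y
  resK : ∀ c ∈ K, ∀ y ∈ O, c = t * y → c = 0

section
variable {F : Type*} [Field F] {K : Subfield F} {O : ValuationSubring F} {t : F}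

lemma zpow_mem_iff (h0 : t ≠ 0) (hO : t ∈ O) (hinv : t⁻¹ ∉ O) (n : ℤ) : t ^ n ∈ O ↔ 0 ≤ n := by
  constructor
  · intro h
    by_contra hn
    push Not at hn
    obtain ⟨m, hm⟩ := Int.eq_ofNat_of_zero_le (show 0 ≤ -n - 1 by omega)
    apply hinv
    have : t⁻¹ = t ^ n * t ^ m := by
      rw [← zpow_natCast, ← zpow_add₀ h0, ← zpow_neg_one]; congr 1; omega
    rw [this]
    exact mul_mem h (pow_mem hO _)
  · intro h
    lift n to ℕ using h
    rw [zpow_natCast]; exact pow_mem hO _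

lemma zpow_mul_unit_mem (h0 : t ≠ 0) (hO : t ∈ O) (hinv : t⁻¹ ∉ O) (n : ℤ) {u : F}
    (hu : IsVUnit O u) : t ^ n * u ∈ O ↔ 0 ≤ n := by
  rw [← zpow_mem_iff h0 hO hinv]
  constructor
  · intro h
    have := mul_mem h hu.2.2
    rwa [mul_assoc, mul_inv_cancel₀ hu.1, mul_one] at this
  · intro h; exact mul_mem h hu.2.1

lemma exists_setup (htriv : TrivialOn O K) (hrat : ResidueEq O K) (hdisc : IsDiscrete O) :
    ∃ t, Setup K O t := by
  obtain ⟨t, h0, hm, hv⟩ := hdisc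
  have hinv : t⁻¹ ∉ O := hm.resolve_left h0
  have hO : t ∈ O := (O.mem_or_inv_mem t).resolve_right hinv
  have hval : ∀ x : F, x ≠ 0 → ∃ n : ℤ, ∃ u, IsVUnit O u ∧ x = t ^ n * u := by
    intro x hx
    obtain ⟨n, hn⟩ := hv x hx
    exact ⟨n, _, hn, by field_simp⟩
  refine ⟨t, h0, hO, hinv, fun x hx => (htriv x hx).1, hval, ?_, ?_⟩
  · intro x hx
    obtain ⟨c, hc, hxc⟩ := hrat x hx
    by_cases h : x - c = 0
    · exact ⟨c, hc, 0, zero_mem _, by linear_combination h⟩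
    have hxc := hxc.resolve_left h
    have hmem : x - c ∈ O := sub_mem hx (htriv c hc).1
    obtain ⟨n, u, hu, e⟩ := hval _ h
    have hn : 0 ≤ n := by
      rw [e, zpow_mul_unit_mem h0 hO hinv n hu] at hmem; exact hmem
    have hn1 : n ≠ 0 := by
      rintro rfl
      apply hxc; rw [e]; simpa using hu.2.2
    refine ⟨c, hc, t ^ (n - 1) * u, ?_, ?_⟩
    · rw [zpow_mul_unit_mem h0 hO hinv _ hu]; omega
    · rw [← mul_assoc, ← zpow_one_add₀ h0]
      rw [show 1 + (n - 1) = n by ring, ← e]; ring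
  · intro c hc y hy e
    by_contra hc0
    apply hinv
    have : t⁻¹ = c⁻¹ * y := by rw [e] at hc0 ⊢; have := (mul_ne_zero_iff.1 hc0).2; field_simp
    rw [this]
    exact mul_mem (htriv c hc).2 hy

namespace Setup
variable (S : Setup K O t)
include S

lemma natval {x : F} (hx : x ∈ O) (h : x ≠ 0) : ∃ n : ℕ, ∃ u, IsVUnit O u ∧ x = t ^ n * u := by
  obtain ⟨n, u, hu, e⟩ := S.val x h
  rw [e, zpow_mul_unit_mem S.ne S.tO S.tinv n hu] at hx
  lift n to ℕ using hx
  exact ⟨n, u, hu, by simpa using e⟩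

lemma exists_scale (x : F) : ∃ n : ℕ, ∀ m ≥ n, t ^ m * x ∈ O := by
  by_cases h : x = 0
  · exact ⟨0, by simp [h]⟩
  obtain ⟨n, u, hu, e⟩ := S.val x h
  refine ⟨n.natAbs, fun m hm => ?_⟩
  rw [e, ← mul_assoc, ← zpow_natCast, ← zpow_add₀ S.ne, zpow_mul_unit_mem S.ne S.tO S.tinv _ hu]
  omega

lemma exists_scale_finset {ι : Type*} (s : Finset ι) (x : ι → F) :
    ∃ n : ℕ, ∀ i ∈ s, t ^ n * x i ∈ O := by
  choose n hn using fun i => S.exists_scale (x i)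
  exact ⟨s.sup n, fun i hi => hn i _ (Finset.le_sup hi)⟩

lemma eq_zero_of_div {x : F} (h : ∀ n : ℕ, ∃ y ∈ O, x = t ^ n * y) : x = 0 := by
  by_contra hx
  obtain ⟨n, u, hu, e⟩ := S.val x hx
  obtain ⟨y, hy, e'⟩ := h (n.natAbs + 1)
  have : t ^ (n - (n.natAbs + 1 : ℕ)) * u ∈ O := by
    have : t ^ (n - (n.natAbs + 1 : ℕ)) * u = y := by
      rw [zpow_sub₀ S.ne, zpow_natCast, div_mul_eq_mul_div, ← e, e']
      field_simp [S.ne]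
    rwa [this]
  rw [zpow_mul_unit_mem S.ne S.tO S.tinv _ hu] at this
  omega

lemma B_sub {x : F} (hx : x ∈ Algebra.adjoin K {t}) : x ∈ O := by
  induction hx using Algebra.adjoin_induction with
  | mem x hx => rw [Set.mem_singleton_iff.1 hx]; exact S.tO
  | algebraMap r => exact S.hK _ r.2
  | add x y _ _ h1 h2 => exact add_mem h1 h2
  | mul x y _ _ h1 h2 => exact mul_mem h1 h2

omit S in
lemma tB : t ∈ Algebra.adjoin K {t} := Algebra.subset_adjoin rfl

lemma approx {x : F} (hx : x ∈ O) (n : ℕ) :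
    ∃ q ∈ Algebra.adjoin K {t}, ∃ y ∈ O, x = q + t ^ n * y := by
  induction n with
  | zero => exact ⟨0, zero_mem _, x, hx, by simp⟩
  | succ n ih =>
    obtain ⟨q, hq, y, hy, e⟩ := ih
    obtain ⟨c, hc, y', hy', e'⟩ := S.res y hy
    refine ⟨q + t ^ n * c, add_mem hq (mul_mem (pow_mem tB _) ?_), y', hy', ?_⟩
    · exact (Algebra.adjoin K {t}).algebraMap_mem ⟨c, hc⟩
    · rw [e, e']; ring

omit S in
lemma B_decomp {x : F} (hx : x ∈ Algebra.adjoin K {t}) :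
    ∃ c ∈ K, ∃ y ∈ Algebra.adjoin K {t}, x = c + t * y := by
  induction hx using Algebra.adjoin_induction with
  | mem x hx => rw [Set.mem_singleton_iff.1 hx]; exact ⟨0, zero_mem _, 1, one_mem _, by simp⟩
  | algebraMap r => exact ⟨r, r.2, 0, zero_mem _, by simp; rfl⟩
  | add x y _ _ h1 h2 =>
    obtain ⟨c, hc, y, hy, rfl⟩ := h1
    obtain ⟨c', hc', y', hy', rfl⟩ := h2
    exact ⟨c + c', add_mem hc hc', y + y', add_mem hy hy', by ring⟩
  | mul x y _ hb h1 h2 =>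
    obtain ⟨c, hc, y, hy, rfl⟩ := h1
    obtain ⟨c', hc', y', hy', rfl⟩ := h2
    refine ⟨c * c', mul_mem hc hc', c * y' + y * (c' + t * y'), ?_, by ring⟩
    exact add_mem (mul_mem ((Algebra.adjoin K {t}).algebraMap_mem ⟨c, hc⟩) hy') (mul_mem hy hb)

/-- an element of `K[t]` divisible by `t ^ n` in `O` is so in `K[t]` -/
lemma B_div (n : ℕ) {x : F} (hx : x ∈ O) (h : t ^ n * x ∈ Algebra.adjoin K {t}) :
    x ∈ Algebra.adjoin K {t} := by
  induction n with
  | zero => simpa using h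
  | succ n ih =>
    apply ih
    obtain ⟨c, hc, y, hy, e⟩ := B_decomp h
    have hc0 : c = 0 := by
      apply S.resK c hc (t ^ n * x - y) (sub_mem (mul_mem (pow_mem S.tO _) hx) (S.B_sub hy))
      linear_combination -e
    rw [hc0, zero_add, pow_succ', mul_assoc] at e
    rwa [mul_left_cancel₀ S.ne e]

lemma A_sub {ι : Type*} {y : ι → F} (hy : ∀ i, y i ∈ O) {x : F}
    (hx : x ∈ Algebra.adjoin K (insert t (Set.range y))) : x ∈ O := by
  induction hx using Algebra.adjoin_induction with
  | mem x hx =>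
    rcases hx with rfl | ⟨i, rfl⟩
    · exact S.tO
    · exact hy i
  | algebraMap r => exact S.hK _ r.2
  | add x y _ _ h1 h2 => exact add_mem h1 h2
  | mul x y _ _ h1 h2 => exact mul_mem h1 h2

lemma A_div {ι : Type*} {y y' q : ι → F} {M : ℕ} (hq : ∀ i, q i ∈ Algebra.adjoin K {t})
    (hy' : ∀ i, y' i ∈ O) (e : ∀ i, y i = q i + t ^ M * y' i) {n : ℕ} (hn : n ≤ M)
    {x : F} (hx : x ∈ O) (h : t ^ n * x ∈ Algebra.adjoin K (insert t (Set.range y))) :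
    x ∈ Algebra.adjoin K (insert t (Set.range y')) := by
  have hBA : Algebra.adjoin K {t} ≤ Algebra.adjoin K (insert t (Set.range y')) :=
    Algebra.adjoin_mono (by simp)
  have key : ∀ z ∈ Algebra.adjoin K (insert t (Set.range y)),
      ∃ b ∈ Algebra.adjoin K {t}, ∃ a ∈ Algebra.adjoin K (insert t (Set.range y')),
        z = b + t ^ M * a := by
    intro z hz
    induction hz using Algebra.adjoin_induction with
    | mem x hx =>
      rcases hx with rfl | ⟨i, rfl⟩
      · exact ⟨x, tB, 0, zero_mem _, by simp⟩
      · exact ⟨q i, hq i, y' i, Algebra.subset_adjoin (by simp), e i⟩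
    | algebraMap r => exact ⟨_, algebraMap_mem _ r, 0, zero_mem _, by simp⟩
    | add x y _ _ h1 h2 =>
      obtain ⟨c, hc, y, hy, rfl⟩ := h1
      obtain ⟨c', hc', y', hy', rfl⟩ := h2
      exact ⟨c + c', add_mem hc hc', y + y', add_mem hy hy', by ring⟩
    | mul x y _ hb h1 h2 =>
      obtain ⟨c, hc, y, hy, rfl⟩ := h1
      obtain ⟨c', hc', y', hy', rfl⟩ := h2
      refine ⟨c * c', mul_mem hc hc', c * y' + y * (c' + t ^ M * y'), ?_, by ring⟩
      refine add_mem (mul_mem (hBA hc) hy') (mul_mem hy (add_mem (hBA hc') (mul_mem ?_ hy')))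
      exact pow_mem (hBA tB) _
  obtain ⟨b, hb, a, ha, e1⟩ := key _ h
  have e2 : b = t ^ n * (x - t ^ (M - n) * a) := by
    have : t ^ M = t ^ n * t ^ (M - n) := by rw [← pow_add]; congr 1; omega
    rw [this] at e1
    linear_combination -e1
  have h3 : x - t ^ (M - n) * a ∈ Algebra.adjoin K {t} := by
    apply S.B_div n
    · exact sub_mem hx (mul_mem (pow_mem S.tO _) (S.A_sub hy' ha))
    · rwa [← e2]
  have := add_mem (hBA h3) (mul_mem (pow_mem (hBA tB) (M - n)) ha)
  simpa using this

lemma step {A : Subalgebra K F} (hAO : ∀ x ∈ A, x ∈ O) (htA : t ∈ A) {z : F} (hz : z ∈ O)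
    {f : F[X]} (hf : ∀ i, f.coeff i ∈ A) (hfz : f.eval z = 0) (hfz' : f.derivative.eval z ≠ 0) :
    ∃ (k M : ℕ) (q : F) (z' : F), q ∈ Algebra.adjoin K {t} ∧ z' ∈ O ∧ z = q + t ^ k * z' ∧
      ∃ g : F[X], (∀ i, g.coeff i ∈ O ∧ t ^ M * g.coeff i ∈ A) ∧ g.eval z' = 0 ∧
        IsVUnit O (g.derivative.eval z') := by
  obtain ⟨f0, hf0⟩ : ∃ f0 : (↥O)[X], f0.map O.subtype = f := by
    have : f ∈ Polynomial.lifts O.subtype := by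
      rw [Polynomial.lifts_iff_coeff_lifts]
      intro n; exact ⟨⟨_, hAO _ (hf n)⟩, rfl⟩
    simpa [Polynomial.mem_lifts] using this
  obtain ⟨fA, hfA⟩ : ∃ f0 : (↥A)[X], f0.map (A.val : ↥A →+* F) = f := by
    have : f ∈ Polynomial.lifts (A.val : ↥A →+* F) := by
      rw [Polynomial.lifts_iff_coeff_lifts]
      intro n; exact ⟨⟨_, hf n⟩, rfl⟩
    simpa [Polynomial.mem_lifts] using this
  have ez : ∀ (h : (↥O)[X]) (w : ↥O), ((h.eval w : ↥O) : F) = (h.map O.subtype).eval (w : F) := by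
    intro h w
    exact (Polynomial.eval_map_apply (f := O.subtype) (p := h) w).symm
  have hdO : f.derivative.eval z ∈ O := by
    have := ez f0.derivative ⟨z, hz⟩
    rw [← Polynomial.derivative_map, hf0] at this
    rw [← this]; exact Subtype.mem _
  obtain ⟨N, u, hu, hN⟩ := S.natval hdO hfz'
  obtain ⟨q, hq, z', hz', e⟩ := S.approx hz N
  have hqO := S.B_sub hq
  let z0 : ↥O := ⟨z, hz⟩
  let t0 : ↥O := ⟨t, S.tO⟩
  let q0 : ↥O := ⟨q, hqO⟩
  let w0 : ↥O := ⟨z', hz'⟩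
  let u0 : ↥O := ⟨u, hu.2.1⟩
  have hA0 : f0.eval z0 = 0 := by
    apply Subtype.ext; rw [ez, hf0]; exact hfz
  have hA1 : f0.derivative.eval z0 = t0 ^ N * u0 := by
    apply Subtype.ext; rw [ez, ← Polynomial.derivative_map, hf0]; exact hN
  have hA2 : z0 = q0 + t0 ^ N * w0 := Subtype.ext e
  obtain ⟨h, hh⟩ := (f0.map (C : ↥O →+* (↥O)[X])).binomExpansion (C z0) (C (t0 ^ N) * (X - C w0))
  have e1 : C z0 + C (t0 ^ N) * (X - C w0) = C q0 + C (t0 ^ N) * X := by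
    rw [hA2]; simp only [map_add, map_mul]; ring
  rw [e1, Polynomial.derivative_map, Polynomial.eval_map_apply, Polynomial.eval_map_apply, hA0, hA1,
    Polynomial.eval_map] at hh
  let g0 : (↥O)[X] := C u0 * (X - C w0) + h * (X - C w0) ^ 2
  have hg : f0.comp (C q0 + C (t0 ^ N) * X) = C (t0 ^ (2 * N)) * g0 := by
    rw [Polynomial.comp, hh]; simp only [g0, map_mul, map_pow, map_zero]; ring
  refine ⟨N, 2 * N, q, z', hq, hz', e, g0.map O.subtype, ?_, ?_, ?_⟩
  · intro i
    refine ⟨?_, ?_⟩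
    · rw [Polynomial.coeff_map]; exact Subtype.mem _
    · have h1 := congrArg (fun r => (Polynomial.map O.subtype r).coeff i) hg
      simp only [Polynomial.map_comp, hf0, Polynomial.map_mul, Polynomial.map_C,
        Polynomial.coeff_C_mul, Polynomial.map_add, Polynomial.map_X] at h1
      have h2 : O.subtype (t0 ^ (2 * N)) = t ^ (2 * N) := by simp [t0]
      rw [h2] at h1
      rw [← h1]
      have h3 : O.subtype q0 = q := rfl
      have h4 : O.subtype (t0 ^ N) = t ^ N := by simp [t0]
      rw [h3, h4]
      have hqA : q ∈ A := (Algebra.adjoin_le (by simpa using htA) : Algebra.adjoin K {t} ≤ A) hq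
      have h5 : f.comp (C q + C (t ^ N) * X) =
          (fA.comp (C ⟨q, hqA⟩ + C (⟨t, htA⟩ ^ N) * X)).map (A.val : ↥A →+* F) := by
        rw [Polynomial.map_comp, hfA]; simp
      rw [h5, Polynomial.coeff_map]
      exact Subtype.mem _
  · have := ez g0 w0
    rw [show z' = (w0 : F) from rfl, ← this]; simp [g0]
  · have := ez g0.derivative w0
    rw [← Polynomial.derivative_map] at this
    rw [show z' = (w0 : F) from rfl, ← this]
    simpa [g0, u0, Polynomial.derivative_pow] using hu

end Setup
end
end LocalUnif

namespace LocalUnif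
namespace Setup
section
variable {F : Type*} [Field F] {K : Subfield F} {O : ValuationSubring F} {t : F}

lemma descent (S : Setup K O t) (p : ℕ) [hp : Fact p.Prime] [CharP F p] {β : Type*} (e : β → K)
    (he : ∀ (T : Finset β) (c : β → K), ∑ b ∈ T, e b * c b ^ p = 0 → ∀ b ∈ T, c b = 0)
    (T : Finset β) (w : β → ℕ → F) (hw : ∀ b ∈ T, ∀ j < p, w b j ∈ O)
    (h : ∑ j ∈ Finset.range p, t ^ j * ∑ b ∈ T, (e b : F) * w b j ^ p = 0) :
    ∀ j < p, ∀ b ∈ T, ∃ y ∈ O, w b j = t * y := by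
  intro j
  induction j using Nat.strong_induction_on with
  | _ j ih =>
  intro hj
  set Q : ℕ → F := fun j => ∑ b ∈ T, (e b : F) * w b j ^ p with hQ
  have hQO : ∀ i < p, Q i ∈ O := fun i hi =>
    sum_mem fun b hb => mul_mem (S.hK _ (e b).2) (pow_mem (hw b hb i hi) _)
  have ht := S.ne
  have h1 : Q j / t ∈ O := by
    have e1 : Q j / t = - ∑ i ∈ (Finset.range p).erase j, (t ^ i * Q i) / t ^ (j + 1) := by
      rw [← Finset.sum_div]
      have := Finset.add_sum_erase (Finset.range p) (fun i => t ^ i * Q i) (Finset.mem_range.2 hj)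
      rw [h] at this
      have e2 : ∑ i ∈ (Finset.range p).erase j, (t ^ i * Q i) = - (t ^ j * Q j) := by
        linear_combination this
      rw [e2]
      field_simp
      ring
    rw [e1]
    refine neg_mem (sum_mem fun i hi => ?_)
    rw [Finset.mem_erase, Finset.mem_range] at hi
    rcases lt_or_gt_of_ne hi.1 with hlt | hgt
    · have h2 : Q i / t ^ p ∈ O := by
        simp only [hQ]
        rw [Finset.sum_div]
        refine sum_mem fun b hb => ?_
        obtain ⟨y, hy, e3⟩ := ih i hlt hi.2 b hb
        rw [e3, mul_pow]
        have : (e b : F) * (t ^ p * y ^ p) / t ^ p = e b * y ^ p := by field_simp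
        rw [this]
        exact mul_mem (S.hK _ (e b).2) (pow_mem hy _)
      have : t ^ i * Q i / t ^ (j + 1) = t ^ i * t ^ (p - (j + 1)) * (Q i / t ^ p) := by
        have e4 : t ^ p = t ^ (j + 1) * t ^ (p - (j + 1)) := by
          rw [← pow_add]; congr 1; omega
        rw [e4]; field_simp
      rw [this]
      exact mul_mem (mul_mem (pow_mem S.tO _) (pow_mem S.tO _)) h2
    · have : t ^ i * Q i / t ^ (j + 1) = t ^ (i - (j + 1)) * Q i := by
        have e4 : t ^ i = t ^ (j + 1) * t ^ (i - (j + 1)) := by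
          rw [← pow_add]; congr 1; omega
        rw [e4]; field_simp
      rw [this]
      exact mul_mem (pow_mem S.tO _) (hQO i hi.2)
  have h2 : ∀ b, ∃ c : K, ∃ y : F, b ∈ T → y ∈ O ∧ w b j = c + t * y := by
    intro b
    by_cases hb : b ∈ T
    · obtain ⟨c, hc, y, hy, e1⟩ := S.res _ (hw b hb j hj)
      exact ⟨⟨c, hc⟩, y, fun _ => ⟨hy, e1⟩⟩
    · exact ⟨0, 0, fun h => absurd h hb⟩
  choose c y hy using h2
  have h3 : ∑ b ∈ T, e b * c b ^ p = 0 := by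
    apply Subtype.ext
    have hp0 : p = (p - 1) + 1 := by have := hp.out.pos; omega
    refine S.resK _ (Subtype.mem _) (Q j / t - ∑ b ∈ T, e b * (t ^ (p - 1) * y b ^ p)) ?_ ?_
    · exact sub_mem h1 (sum_mem fun b hb => mul_mem (S.hK _ (e b).2)
        (mul_mem (pow_mem S.tO _) (pow_mem (hy b hb).1 _)))
    · have e5 : Q j = ∑ b ∈ T, ((e b : F) * c b ^ p + t * (e b * (t ^ (p - 1) * y b ^ p))) := by
        refine Finset.sum_congr rfl fun b hb => ?_
        rw [(hy b hb).2, add_pow_char, mul_pow]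
        nth_rewrite 2 [hp0]
        ring
      rw [Finset.sum_add_distrib, ← Finset.mul_sum] at e5
      rw [mul_sub, mul_div_cancel₀ _ ht, e5]
      push_cast
      ring
  intro b hb
  have := he T c h3 b hb
  refine ⟨y b, (hy b hb).1, ?_⟩
  rw [(hy b hb).2, this]; simp

lemma indep (S : Setup K O t) (p : ℕ) [hp : Fact p.Prime] [CharP F p] {β : Type*} (e : β → K)
    (he : ∀ (T : Finset β) (c : β → K), ∑ b ∈ T, e b * c b ^ p = 0 → ∀ b ∈ T, c b = 0)
    (T : Finset β) (w : β → ℕ → F)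
    (h : ∑ j ∈ Finset.range p, t ^ j * ∑ b ∈ T, (e b : F) * w b j ^ p = 0) :
    ∀ j < p, ∀ b ∈ T, w b j = 0 := by
  have ht := S.ne
  have scale : ∀ (x : F) (w : β → ℕ → F),
      ∑ j ∈ Finset.range p, t ^ j * ∑ b ∈ T, (e b : F) * w b j ^ p = 0 →
      ∑ j ∈ Finset.range p, t ^ j * ∑ b ∈ T, (e b : F) * (x * w b j) ^ p = 0 := by
    intro x w h
    have : ∑ j ∈ Finset.range p, t ^ j * ∑ b ∈ T, (e b : F) * (x * w b j) ^ p
      = x ^ p * ∑ j ∈ Finset.range p, t ^ j * ∑ b ∈ T, (e b : F) * w b j ^ p := by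
      simp only [Finset.mul_sum]
      refine Finset.sum_congr rfl fun j _ => Finset.sum_congr rfl fun b _ => ?_
      ring
    rw [this, h, mul_zero]
  have key : ∀ (n : ℕ) (w : β → ℕ → F), (∀ b ∈ T, ∀ j < p, w b j ∈ O) →
      ∑ j ∈ Finset.range p, t ^ j * ∑ b ∈ T, (e b : F) * w b j ^ p = 0 →
      ∀ j < p, ∀ b ∈ T, ∃ y ∈ O, w b j = t ^ n * y := by
    intro n
    induction n with
    | zero => intro w hw _ j hj b hb; exact ⟨_, hw b hb j hj, by simp⟩
    | succ n ih =>
      intro w hw h j hj b hb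
      have h1 := S.descent p e he T w hw h
      obtain ⟨y, hy, e1⟩ := ih (fun b j => t⁻¹ * w b j) (fun b hb j hj => by
        obtain ⟨y, hy, e1⟩ := h1 j hj b hb
        rw [e1, inv_mul_cancel_left₀ ht]; exact hy) (scale _ _ h) j hj b hb
      refine ⟨y, hy, ?_⟩
      rw [pow_succ', mul_assoc, ← e1, mul_inv_cancel_left₀ ht]
  obtain ⟨N, hN⟩ := S.exists_scale_finset (T ×ˢ Finset.range p) (fun i => w i.1 i.2)
  intro j hj b hb
  have : t ^ N * w b j = 0 := S.eq_zero_of_div fun n =>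
    key n (fun b j => t ^ N * w b j) (fun b hb j hj => hN (b, j) (by simp [hb, hj])) (scale _ _ h)
      j hj b hb
  exact (mul_eq_zero.1 this).resolve_left (pow_ne_zero _ ht)

lemma span (p : ℕ) [hp : Fact p.Prime] [CharP F p] {β : Type*} (e : β → K)
    (he : ∀ (P : K → Prop), P 0 → (∀ x y, P x → P y → P (x + y)) → (∀ b c, P (e b * c ^ p)) →
      ∀ x, P x)
    {x : F} (hx : x ∈ Algebra.adjoin K {t}) :
    ∃ w : β × ℕ →₀ F, (∀ i, w i ∈ Algebra.adjoin K {t}) ∧ (∀ i ∈ w.support, i.2 < p) ∧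
      x = w.sum fun i y => e i.1 * t ^ i.2 * y ^ p := by
  classical
  have hp0 : p ≠ 0 := hp.out.ne_zero
  set P : F → Prop := fun x => ∃ w : β × ℕ →₀ F, (∀ i, w i ∈ Algebra.adjoin K {t}) ∧
    (∀ i ∈ w.support, i.2 < p) ∧ x = w.sum fun i y => e i.1 * t ^ i.2 * y ^ p with hP
  have P0 : P 0 := ⟨0, by simp, by simp, by simp⟩
  have Padd : ∀ x y, P x → P y → P (x + y) := by
    rintro x y ⟨w, h1, h2, rfl⟩ ⟨w', h1', h2', rfl⟩
    refine ⟨w + w', fun i => add_mem (h1 i) (h1' i), fun i hi => ?_, ?_⟩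
    · rcases Finset.mem_union.1 (Finsupp.support_add hi) with h | h
      exacts [h2 i h, h2' i h]
    · rw [Finsupp.sum_add_index']
      · simp [hp0]
      · intro i a b; rw [add_pow_char]; ring
  have Pm : ∀ (c : K) (n : ℕ), P (c * t ^ n) := by
    intro c n
    refine he (fun c => P (c * t ^ n)) (by simpa using P0) ?_ ?_ c
    · intro x y hx hy
      have := Padd _ _ hx hy
      simpa [add_mul] using this
    · intro b c
      refine ⟨Finsupp.single (b, n % p) (c * t ^ (n / p)), ?_, ?_, ?_⟩
      · intro i
        rw [Finsupp.single_apply]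
        split_ifs
        · exact mul_mem (algebraMap_mem _ c) (pow_mem tB _)
        · exact zero_mem _
      · intro i hi
        have := Finsupp.support_single_subset hi
        rw [Finset.mem_singleton.1 this]
        exact Nat.mod_lt _ hp.out.pos
      · rw [Finsupp.sum_single_index (by simp [hp0])]
        push_cast
        nth_rewrite 1 [← Nat.mod_add_div n p]
        rw [pow_add, pow_mul']
        ring
  obtain ⟨f, rfl⟩ := (Algebra.adjoin_singleton_eq_range_aeval (↥K) t ▸ hx :
    x ∈ (Polynomial.aeval (R := K) t).range)
  change P _
  induction f using Polynomial.induction_on' with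
  | add f g hf hg =>
    have hm : ∀ f : Polynomial K, Polynomial.aeval t f ∈ Algebra.adjoin K {t} := fun f => by
      rw [Algebra.adjoin_singleton_eq_range_aeval]; exact ⟨f, rfl⟩
    have := Padd _ _ (hf (hm f)) (hg (hm g))
    simpa using this
  | monomial n a =>
    have := Pm a n
    have e6 : (Polynomial.aeval t) ((Polynomial.monomial n) a) = (a : F) * t ^ n := by
      rw [Polynomial.aeval_monomial]; rfl
    rw [← e6] at this
    exact this

lemma maclane (S : Setup K O t) (p : ℕ) [hp : Fact p.Prime] [CharP F p] (s : Finset F)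
    (c : F → F) (hc : ∀ a, c a ∈ Algebra.adjoin K {t})
    (hs : ∀ d : F → F, (∀ a, d a ∈ Algebra.adjoin K {t}) → ∑ a ∈ s, d a * a = 0 →
      ∀ a ∈ s, d a = 0)
    (h : ∑ a ∈ s, c a * a ^ p = 0) : ∀ a ∈ s, c a = 0 := by
  classical
  have : CharP K p := inferInstance
  let Kp : Subfield K := (frobenius K p).fieldRange
  let e := Module.Basis.ofVectorSpace Kp K
  have he1 : ∀ (T : Finset _) (c : _ → K), ∑ b ∈ T, e b * c b ^ p = 0 → ∀ b ∈ T, c b = 0 := by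
    intro T c h b hb
    have := linearIndependent_iff'.1 e.linearIndependent T
      (fun b => (⟨c b ^ p, c b, rfl⟩ : Kp)) (by
        rw [← h]; refine Finset.sum_congr rfl fun b _ => ?_
        rw [mul_comm]; rfl) b hb
    have h2 : c b ^ p = 0 := congrArg Subtype.val this
    exact pow_eq_zero_iff hp.out.ne_zero |>.1 h2
  have he2 : ∀ (P : K → Prop), P 0 → (∀ x y, P x → P y → P (x + y)) → (∀ b c, P (e b * c ^ p)) →
      ∀ x, P x := by
    intro P h0 h1 h2 x
    rw [← e.linearCombination_repr x, Finsupp.linearCombination_apply, Finsupp.sum]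
    refine Finset.sum_induction _ P h1 h0 fun b _ => ?_
    obtain ⟨r, hr⟩ := (e.repr x b).2
    have := h2 b r
    rw [mul_comm] at this
    have e3 : (e.repr x) b • e b = r ^ p * e b := by
      change ((e.repr x b : Kp) : K) * e b = _
      rw [← hr]; rfl
    rwa [e3]
  choose w hw1 hw2 hw3 using fun a => span p (fun b => e b) he2 (hc a)
  let U := s.biUnion fun a => (w a).support
  let T := U.image Prod.fst
  have hsub : ∀ a ∈ s, (w a).support ⊆ T ×ˢ Finset.range p := by
    intro a ha i hi
    rw [Finset.mem_product, Finset.mem_range]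
    exact ⟨Finset.mem_image_of_mem _ (Finset.mem_biUnion.2 ⟨a, ha, hi⟩), hw2 a i hi⟩
  have hexp : ∀ a ∈ s, c a = ∑ j ∈ Finset.range p, t ^ j * ∑ b ∈ T, (e b : F) * w a (b, j) ^ p := by
    intro a ha
    rw [hw3 a, Finsupp.sum_of_support_subset _ (hsub a ha) _ (by simp [hp.out.ne_zero]),
      Finset.sum_product_right]
    refine Finset.sum_congr rfl fun j _ => ?_
    rw [Finset.mul_sum]
    refine Finset.sum_congr rfl fun b _ => ?_
    ring
  have h4 := S.indep p (fun b => e b) he1 T (fun b j => ∑ a ∈ s, w a (b, j) * a) (by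
    have h5 : ∑ a ∈ s, c a * a ^ p = ∑ a ∈ s,
        (∑ j ∈ Finset.range p, t ^ j * ∑ b ∈ T, (e b : F) * w a (b, j) ^ p) * a ^ p :=
      Finset.sum_congr rfl fun a ha => by rw [← hexp a ha]
    rw [← h, h5]
    simp only [sum_pow_char, mul_pow, Finset.mul_sum, Finset.sum_mul]
    rw [Finset.sum_comm (s := s)]
    refine Finset.sum_congr rfl fun j _ => ?_
    rw [Finset.sum_comm]
    refine Finset.sum_congr rfl fun a _ => Finset.sum_congr rfl fun b _ => ?_
    ring)
  intro a ha
  rw [hexp a ha]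
  refine Finset.sum_eq_zero fun j hj => ?_
  rw [Finset.sum_eq_zero, mul_zero]
  intro b hb
  have := hs (fun a => w a (b, j)) (fun a => hw1 a _) (h4 j (Finset.mem_range.1 hj) b hb) a ha
  rw [this]
  simp [hp.out.ne_zero]

end
end Setup
end LocalUnif

namespace LocalUnif
open Polynomial
section
variable {F : Type*} [Field F] {K : Subfield F} {O : ValuationSubring F} {t : F}

lemma clear_denoms (s : Finset F) (G : Set F) (hs : ∀ x ∈ s, x ∈ IntermediateField.adjoin K G) :
    ∃ a ∈ Algebra.adjoin K G, a ≠ 0 ∧ ∀ x ∈ s, a * x ∈ Algebra.adjoin K G := by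
  classical
  induction s using Finset.induction_on with
  | empty => exact ⟨1, one_mem _, one_ne_zero, by simp⟩
  | insert x s hx ih =>
    obtain ⟨a, ha, ha0, h⟩ := ih fun y hy => hs y (Finset.mem_insert_of_mem hy)
    obtain ⟨r, hr, d, hd, e⟩ := IntermediateField.mem_adjoin_iff_div.1
      (hs x (Finset.mem_insert_self _ _))
    by_cases hd0 : d = 0
    · refine ⟨a, ha, ha0, fun y hy => ?_⟩
      rcases Finset.mem_insert.1 hy with rfl | hy
      · rw [e, hd0]; simp
      · exact h y hy
    · refine ⟨a * d, mul_mem ha hd, mul_ne_zero ha0 hd0, fun y hy => ?_⟩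
      rcases Finset.mem_insert.1 hy with rfl | hy
      · rw [e]
        have : a * d * (r / d) = a * r := by field_simp
        rw [this]; exact mul_mem ha hr
      · rw [mul_right_comm]; exact mul_mem (h y hy) hd

lemma Setup.linIndep (S : Setup K O t) (p : ℕ) [hp : Fact p.Prime] [CharP F p] (s : Finset F)
    (hs : LinearIndepOn (IntermediateField.adjoin K {t}) id (s : Set F)) :
    LinearIndepOn (IntermediateField.adjoin K {t}) (fun x : F => x ^ p) (s : Set F) := by
  classical
  rw [linearIndepOn_finset_iff] at hs ⊢
  intro f hf a ha
  obtain ⟨b, hb, hb0, h⟩ := clear_denoms (K := K) (s.image fun a => (f a : F)) {t} (by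
    intro x hx
    obtain ⟨a, _, rfl⟩ := Finset.mem_image.1 hx
    exact (f a).2)
  have := S.maclane p s (fun a => if a ∈ s then b * f a else 0) (by
    intro a
    split_ifs with has
    · exact h _ (Finset.mem_image_of_mem _ has)
    · exact zero_mem _) (by
    intro d hd hsum a ha
    have := hs (fun a => ⟨d a, IntermediateField.algebra_adjoin_le_adjoin _ _ (hd a)⟩) (by
      rw [← hsum]; rfl) a ha
    exact congrArg Subtype.val this) (by
    have h1 : ∑ a ∈ s, (f a : F) * a ^ p = 0 := hf
    have h2 : ∑ a ∈ s, (if a ∈ s then b * (f a : F) else 0) * a ^ p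
        = b * ∑ a ∈ s, (f a : F) * a ^ p := by
      rw [Finset.mul_sum]
      refine Finset.sum_congr rfl fun a ha => ?_
      rw [if_pos ha]; ring
    rw [h2, h1, mul_zero]) a ha
  rw [if_pos ha] at this
  exact Subtype.ext ((mul_eq_zero.1 this).resolve_left hb0)

lemma affine_indep {k : Type*} [Field k] [Algebra k F] {ι : Type*} {y : ι → F}
    (hy : AlgebraicIndependent k y) (a b : ι → k) (ha : ∀ i, a i ≠ 0) :
    AlgebraicIndependent k (fun i => algebraMap k F (a i) * y i + algebraMap k F (b i)) := by
  rw [algebraicIndependent_iff_injective_aeval] at hy ⊢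
  let φ : MvPolynomial ι k →ₐ[k] MvPolynomial ι k :=
    MvPolynomial.aeval fun i => MvPolynomial.C (a i) * MvPolynomial.X i + MvPolynomial.C (b i)
  let ψ : MvPolynomial ι k →ₐ[k] MvPolynomial ι k :=
    MvPolynomial.aeval fun i =>
      MvPolynomial.C (a i)⁻¹ * (MvPolynomial.X i - MvPolynomial.C (b i))
  have h1 : ψ.comp φ = AlgHom.id k _ := by
    apply MvPolynomial.algHom_ext
    intro i
    have hC : ∀ c : k, ψ (MvPolynomial.C c) = MvPolynomial.C c := fun c => ψ.commutes c
    have hX : ψ (MvPolynomial.X i) = MvPolynomial.C (a i)⁻¹ * (MvPolynomial.X i - MvPolynomial.C (b i)) := by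
      simp only [ψ, MvPolynomial.aeval_X]
    simp only [AlgHom.comp_apply, φ, MvPolynomial.aeval_X, map_add, map_mul, hC, hX, AlgHom.id_apply]
    rw [← mul_assoc, ← map_mul, mul_inv_cancel₀ (ha i)]
    simp
  have hφ : Function.Injective φ := by
    apply Function.LeftInverse.injective (g := ψ)
    intro x
    exact DFunLike.congr_fun h1 x
  have h2 : MvPolynomial.aeval (R := k)
      (fun i => algebraMap k F (a i) * y i + algebraMap k F (b i)) =
      (MvPolynomial.aeval y).comp φ := by
    apply MvPolynomial.algHom_ext
    intro i
    simp [φ]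
  rw [h2]
  exact hy.comp hφ

lemma Setup.transc (S : Setup K O t) : Transcendental K t := by
  intro h
  apply S.tinv
  apply S.B_sub
  exact (h.isIntegral).inv_mem_adjoin

lemma sep_poly {G : Set F} {E : Type*} [Field E] [Algebra E F] [Algebra.IsSeparable E F]
    (hE : ∀ x : E, algebraMap E F x ∈ IntermediateField.adjoin K G) (z : F) :
    ∃ f : F[X], (∀ i, f.coeff i ∈ IntermediateField.adjoin K G) ∧ f.eval z = 0 ∧
      f.derivative.eval z ≠ 0 := by
  refine ⟨(minpoly E z).map (algebraMap E F), ?_, ?_, ?_⟩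
  · intro i; rw [coeff_map]; exact hE _
  · rw [Polynomial.eval_map_algebraMap]; exact minpoly.aeval E z
  · rw [Polynomial.derivative_map, Polynomial.eval_map_algebraMap]
    exact (Algebra.IsSeparable.isSeparable E z).aeval_derivative_ne_zero (minpoly.aeval E z)

lemma Setup.exists_basis (S : Setup K O t) (hff : IsFunctionField K) :
    ∃ (d : ℕ) (y : Fin d → F), (∀ i, y i ∈ O) ∧
      AlgebraicIndependent (IntermediateField.adjoin K {t}) y ∧
      ∀ z : F, ∃ f : F[X], (∀ i, f.coeff i ∈ IntermediateField.adjoin K (insert t (Set.range y))) ∧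
        f.eval z = 0 ∧ f.derivative.eval z ≠ 0 := by
  classical
  let k := IntermediateField.adjoin K {t}
  obtain ⟨G, hG⟩ := hff.1
  have : Algebra.EssFiniteType k F := by
    rw [← IntermediateField.fg_top_iff]
    refine ⟨G, ?_⟩
    rw [eq_top_iff]
    intro x _
    have hx : x ∈ IntermediateField.adjoin K (G : Set F) := by rw [hG]; trivial
    have hle : IntermediateField.adjoin K (G : Set F) ≤
        (IntermediateField.adjoin k (G : Set F)).restrictScalars K :=
      IntermediateField.adjoin_le_iff.2 (IntermediateField.subset_adjoin _ _)
    exact hle hx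
  obtain ⟨s, hs, hsep⟩ : ∃ s : Finset F, IsTranscendenceBasis k ((↑) : s → F) ∧
      Algebra.IsSeparable (IntermediateField.adjoin k (s : Set F)) F := by
    obtain h0 | ⟨p, hp, hpk⟩ := CharP.exists' F
    · have : CharZero k := inferInstance
      exact exists_isTranscendenceBasis_and_isSeparable_of_perfectField k F
    · have : CharP k p := inferInstance
      have : ExpChar k p := .prime hp.out
      exact exists_isTranscendenceBasis_and_isSeparable_of_linearIndepOn_pow_of_essFiniteType
        p hp.out fun s hs => S.linIndep p s hs
  obtain ⟨N, hN⟩ := S.exists_scale_finset s id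
  let y0 : Fin s.card → F := fun i => (s.equivFin.symm i : F)
  have hy0 : AlgebraicIndependent k y0 := hs.1.comp _ s.equivFin.symm.injective
  have tk : t ∈ k := IntermediateField.subset_adjoin _ _ rfl
  refine ⟨s.card, fun i => t ^ N * y0 i, fun i => hN _ (s.equivFin.symm i).2, ?_, ?_⟩
  · have := affine_indep hy0 (fun _ => (⟨t, tk⟩ : k) ^ N) (fun _ => 0)
      (fun _ => pow_ne_zero _ fun h => S.ne (congrArg Subtype.val h))
    simpa using this
  · set R := Set.range fun i => t ^ N * y0 i
    have ht : t ∈ IntermediateField.adjoin K (insert t R) :=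
      IntermediateField.subset_adjoin _ _ (Set.mem_insert _ _)
    have hle : ∀ x ∈ IntermediateField.adjoin k (s : Set F),
        x ∈ IntermediateField.adjoin K (insert t R) := by
      intro x hx
      have : x ∈ (IntermediateField.adjoin k (s : Set F)).restrictScalars K := hx
      rw [IntermediateField.adjoin_adjoin_left] at this
      have hle' : IntermediateField.adjoin K ({t} ∪ (s : Set F)) ≤
          IntermediateField.adjoin K (insert t R) := by
        refine IntermediateField.adjoin_le_iff.2 ?_
        rintro w (hw | hw)
        · rw [Set.mem_singleton_iff.1 hw]; exact ht
        · have h1 : t ^ N * w ∈ IntermediateField.adjoin K (insert t R) := by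
            refine IntermediateField.subset_adjoin _ _ (Set.mem_insert_of_mem _ ?_)
            exact ⟨s.equivFin ⟨w, hw⟩, by simp [y0]⟩
          have h2 := mul_mem (inv_mem (pow_mem ht N)) h1
          rwa [inv_mul_cancel_left₀ (pow_ne_zero _ S.ne)] at h2
      exact hle' this
    exact sep_poly (E := IntermediateField.adjoin k (s : Set F)) (fun x => hle x x.2)

end
end LocalUnif

namespace LocalUnif
section
variable {F : Type*} [Field F] {K : Subfield F} {O : ValuationSubring F} {t : F}

lemma coeff_of_range (A : Subring F) {n : ℕ} {f : MvPolynomial (Fin n) F}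
    (h : f ∈ (MvPolynomial.map (σ := Fin n) A.subtype).range) (m) : f.coeff m ∈ A := by
  obtain ⟨p, rfl⟩ := h
  rw [MvPolynomial.coeff_map]
  exact (p.coeff m).2

lemma C_range (A : Subring F) {n : ℕ} {a : F} (h : a ∈ A) :
    (MvPolynomial.C a : MvPolynomial (Fin n) F) ∈ (MvPolynomial.map (σ := Fin n) A.subtype).range :=
  ⟨MvPolynomial.C ⟨a, h⟩, by simp⟩

lemma X_range (A : Subring F) {n : ℕ} (i : Fin n) :
    (MvPolynomial.X i : MvPolynomial (Fin n) F) ∈ (MvPolynomial.map (σ := Fin n) A.subtype).range :=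
  ⟨MvPolynomial.X i, by simp⟩

lemma aeval_range (A : Subring F) {n : ℕ} (i : Fin n) (g : Polynomial F)
    (hg : ∀ k, g.coeff k ∈ A) :
    (Polynomial.aeval (MvPolynomial.X i : MvPolynomial (Fin n) F) g) ∈
      (MvPolynomial.map (σ := Fin n) A.subtype).range := by
  rw [Polynomial.aeval_eq_sum_range]
  refine sum_mem fun k _ => ?_
  rw [MvPolynomial.smul_eq_C_mul]
  exact mul_mem (C_range A (hg k)) (pow_mem (X_range A i) k)

lemma aeval_degreeOf {n : ℕ} (i j : Fin n) (hij : i ≠ j) (g : Polynomial F) :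
    MvPolynomial.degreeOf j (Polynomial.aeval (MvPolynomial.X i : MvPolynomial (Fin n) F) g) = 0 := by
  classical
  rw [Polynomial.aeval_eq_sum_range, ← Nat.le_zero]
  refine (MvPolynomial.degreeOf_sum_le _ _ _).trans (Finset.sup_le fun k _ => ?_)
  rw [MvPolynomial.smul_eq_C_mul]
  refine (MvPolynomial.degreeOf_C_mul_le _ _ _).trans ((MvPolynomial.degreeOf_pow_le _ _ _).trans ?_)
  rw [MvPolynomial.degreeOf_X, if_neg hij.symm, mul_zero]

lemma aeval_eval {n : ℕ} (i : Fin n) (g : Polynomial F) (η : Fin n → F) :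
    MvPolynomial.eval η (Polynomial.aeval (MvPolynomial.X i : MvPolynomial (Fin n) F) g) =
      g.eval (η i) := by
  rw [Polynomial.aeval_eq_sum_range, Polynomial.eval_eq_sum_range]
  simp [MvPolynomial.smul_eval]

lemma aeval_pderiv {n : ℕ} (i : Fin n) (g : Polynomial F) (η : Fin n → F) :
    MvPolynomial.eval η (MvPolynomial.pderiv i
      (Polynomial.aeval (MvPolynomial.X i : MvPolynomial (Fin n) F) g)) =
      g.derivative.eval (η i) := by
  rw [Derivation.map_aeval, MvPolynomial.pderiv_X_self, smul_eq_mul, mul_one, aeval_eval]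

lemma det_unit {n : ℕ} (f : Fin n → MvPolynomial (Fin n) F) (η : Fin n → F)
    (hdeg : ∀ i j : Fin n, (i : ℕ) < (j : ℕ) → MvPolynomial.degreeOf j (f i) = 0)
    (hd : ∀ i, IsVUnit O (MvPolynomial.eval η (MvPolynomial.pderiv i (f i)))) :
    IsVUnit O (Matrix.det (Matrix.of fun i j : Fin n =>
      MvPolynomial.eval η (MvPolynomial.pderiv j (f i)))) := by
  classical
  rw [Matrix.det_of_isLowerTriangular]
  · simp only [Matrix.of_apply]
    refine ⟨Finset.prod_ne_zero_iff.2 fun i _ => (hd i).1, prod_mem fun i _ => (hd i).2.1, ?_⟩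
    rw [← Finset.prod_inv_distrib]
    exact prod_mem fun i _ => (hd i).2.2
  · intro i j hij
    have : i < j := hij
    rw [Matrix.of_apply, MvPolynomial.pderiv_eq_zero_of_notMem_vars, map_zero]
    intro h
    have h0 := hdeg i j this
    rw [MvPolynomial.degreeOf_def, Multiset.count_eq_zero] at h0
    rw [MvPolynomial.vars_def, Multiset.mem_toFinset] at h
    exact h0 h

/-- the system of equations -/
lemma exists_system (A : Subring F) {r : ℕ} (z z' q : Fin r → F) (k : Fin r → ℕ)
    (g : Fin r → Polynomial F) (htA : t ∈ A) (hq : ∀ j, q j ∈ A)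
    (e : ∀ j, z j = q j + t ^ k j * z' j) (hg : ∀ j i, (g j).coeff i ∈ A)
    (h0 : ∀ j, (g j).eval (z' j) = 0)
    (h1 : ∀ j, IsVUnit O ((g j).derivative.eval (z' j))) :
    ∃ f : Fin (r + r) → MvPolynomial (Fin (r + r)) F,
    (∀ i m, (f i).coeff m ∈ A) ∧
    (∀ i j : Fin (r + r), (i : ℕ) < (j : ℕ) → MvPolynomial.degreeOf j (f i) = 0) ∧
    (∀ i, MvPolynomial.eval (Fin.append z' z) (f i) = 0) ∧
    IsVUnit O (Matrix.det (Matrix.of fun i j : Fin (r + r) =>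
      MvPolynomial.eval (Fin.append z' z) (MvPolynomial.pderiv j (f i)))) := by
  classical
  let f : Fin (r + r) → MvPolynomial (Fin (r + r)) F := Fin.append
    (fun j => Polynomial.aeval (MvPolynomial.X (Fin.castAdd r j)) (g j))
    (fun j => MvPolynomial.X (Fin.natAdd r j) - MvPolynomial.C (q j) -
      MvPolynomial.C (t ^ k j) * MvPolynomial.X (Fin.castAdd r j))
  have hf1 : ∀ j, f (Fin.castAdd r j) =
      Polynomial.aeval (MvPolynomial.X (Fin.castAdd r j)) (g j) := fun j => by simp [f]
  have hf2 : ∀ j, f (Fin.natAdd r j) = MvPolynomial.X (Fin.natAdd r j) - MvPolynomial.C (q j) -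
      MvPolynomial.C (t ^ k j) * MvPolynomial.X (Fin.castAdd r j) := fun j => by
    simp only [f, Fin.append_right]
  have hdeg : ∀ i j : Fin (r + r), (i : ℕ) < (j : ℕ) → MvPolynomial.degreeOf j (f i) = 0 := by
    intro i j hij
    induction i using Fin.addCases with
    | left i => rw [hf1]; exact aeval_degreeOf _ _ (fun h => by rw [h] at hij; exact lt_irrefl _ hij) _
    | right i =>
      rw [hf2, ← Nat.le_zero]
      have n1 : j ≠ Fin.natAdd r i := fun h => by rw [h] at hij; exact lt_irrefl _ hij
      have n2 : j ≠ Fin.castAdd r i := fun h => by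
        rw [h] at hij; simp at hij
      refine (MvPolynomial.degreeOf_sub_le _ _ _).trans (max_le
        ((MvPolynomial.degreeOf_sub_le _ _ _).trans (max_le ?_ ?_)) ?_)
      · rw [MvPolynomial.degreeOf_X, if_neg n1]
      · rw [MvPolynomial.degreeOf_C]
      · refine (MvPolynomial.degreeOf_C_mul_le _ _ _).trans ?_
        rw [MvPolynomial.degreeOf_X, if_neg n2]
  refine ⟨f, ?_, hdeg, ?_, ?_⟩
  · intro i m
    apply coeff_of_range
    induction i using Fin.addCases with
    | left i => rw [hf1]; exact aeval_range _ _ _ (hg i)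
    | right i =>
      rw [hf2]
      exact sub_mem (sub_mem (X_range _ _) (C_range _ (hq i)))
        (mul_mem (C_range _ (pow_mem htA _)) (X_range _ _))
  · intro i
    induction i using Fin.addCases with
    | left i => rw [hf1, aeval_eval, Fin.append_left, h0]
    | right i => 
      rw [hf2]
      simp only [map_sub, map_mul, MvPolynomial.eval_X, MvPolynomial.eval_C, Fin.append_right,
        Fin.append_left, e i]
      ring
  · refine det_unit f _ hdeg fun i => ?_
    induction i using Fin.addCases with
    | left i => rw [hf1, aeval_pderiv, Fin.append_left]; exact h1 i
    | right i =>
      have n2 : Fin.castAdd r i ≠ Fin.natAdd r i := fun h => by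
        have := congrArg Fin.val h
        simp at this; omega
      have : MvPolynomial.eval (Fin.append z' z)
          (MvPolynomial.pderiv (Fin.natAdd r i) (f (Fin.natAdd r i))) = 1 := by
        rw [hf2, Derivation.map_sub, Derivation.map_sub,
          MvPolynomial.pderiv_X_self, MvPolynomial.pderiv_C,
          MvPolynomial.pderiv_C_mul, MvPolynomial.pderiv_X_of_ne n2]
        simp
      rw [this]
      exact ⟨one_ne_zero, one_mem _, by rw [inv_one]; exact one_mem _⟩

lemma poly_alg {G : Set F} {z : F} {f : Polynomial F}
    (hf : ∀ i, f.coeff i ∈ IntermediateField.adjoin K G) (hz : f.eval z = 0)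
    (hz' : f.derivative.eval z ≠ 0) : IsAlgebraic (IntermediateField.adjoin K G) z := by
  have hl : f ∈ Polynomial.lifts (algebraMap (IntermediateField.adjoin K G) F) := by
    rw [Polynomial.lifts_iff_coeff_lifts]
    exact fun i => ⟨⟨_, hf i⟩, rfl⟩
  obtain ⟨p, rfl⟩ := (Polynomial.mem_lifts _).1 hl
  refine ⟨p, ?_, ?_⟩
  · rintro rfl; simp at hz'
  · rwa [Polynomial.eval_map_algebraMap] at hz

lemma main (S : Setup K O t) (hff : IsFunctionField K) : UnifIn ⊤ K O := by
  classical
  intro m ζ hζ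
  obtain ⟨d, y, hyO, hyind, hsep⟩ := S.exists_basis hff
  obtain ⟨G, hG⟩ := hff.1
  let gen : Fin G.card → F := fun i =>
    if ((G.equivFin.symm i : G) : F) ∈ O then (G.equivFin.symm i : F) else (G.equivFin.symm i : F)⁻¹
  have hgen : ∀ i, gen i ∈ O := by
    intro i
    simp only [gen]
    split_ifs with h
    · exact h
    · exact (O.mem_or_inv_mem _).resolve_left h
  obtain ⟨r, hr⟩ : ∃ r, r = m + G.card := ⟨_, rfl⟩
  subst hr
  set r := m + G.card with hr
  let z : Fin r → F := Fin.append ζ gen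
  have hz : ∀ j, z j ∈ O := by
    intro j
    induction j using Fin.addCases with
    | left i => simp only [z, Fin.append_left]; exact (hζ i).2
    | right i => simp only [z, Fin.append_right]; exact hgen i
  have hstep : ∀ j, ∃ (k M : ℕ) (q z' : F) (g : Polynomial F), q ∈ Algebra.adjoin K {t} ∧ z' ∈ O ∧
      z j = q + t ^ k * z' ∧ (∀ i, g.coeff i ∈ O ∧
        t ^ M * g.coeff i ∈ Algebra.adjoin K (insert t (Set.range y))) ∧
      g.eval z' = 0 ∧ IsVUnit O (g.derivative.eval z') := by
    intro j
    obtain ⟨f, hf, hf0, hf1⟩ := hsep (z j)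
    obtain ⟨a, ha, ha0, h⟩ := clear_denoms (K := K) (f.support.image f.coeff)
      (insert t (Set.range y)) (by
        intro x hx
        obtain ⟨i, _, rfl⟩ := Finset.mem_image.1 hx
        exact hf i)
    have hc : ∀ i, (Polynomial.C a * f).coeff i ∈ Algebra.adjoin K (insert t (Set.range y)) := by
      intro i
      rw [Polynomial.coeff_C_mul]
      by_cases hi : i ∈ f.support
      · exact h _ (Finset.mem_image_of_mem _ hi)
      · rw [Polynomial.notMem_support_iff.1 hi, mul_zero]; exact zero_mem _
    obtain ⟨k, M, q, z', hq, hz', e, g, hg, hg0, hg1⟩ := S.step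
      (A := Algebra.adjoin K (insert t (Set.range y))) (fun x hx => S.A_sub hyO hx)
      (Algebra.subset_adjoin (Set.mem_insert _ _)) (hz j) hc
      (by rw [Polynomial.eval_mul, hf0, mul_zero])
      (by rw [Polynomial.derivative_C_mul, Polynomial.eval_mul, Polynomial.eval_C]
          exact mul_ne_zero ha0 hf1)
    exact ⟨k, M, q, z', g, hq, hz', e, hg, hg0, hg1⟩
  choose k M q z' g hq hz' e hg hg0 hg1 using hstep
  obtain ⟨N, hN⟩ : ∃ N, ∀ j, M j ≤ N :=
    ⟨Finset.univ.sup M, fun j => Finset.le_sup (Finset.mem_univ j)⟩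
  have happ := fun i => S.approx (hyO i) N
  choose qq hqq y' hy' ey using happ
  have hgA : ∀ j i, (g j).coeff i ∈ Algebra.adjoin K (insert t (Set.range y')) := fun j i =>
    S.A_div hqq hy' ey (hN j) (hg j i).1 (hg j i).2
  let τ : Fin (d + 1) → F := Sum.elim y' (fun _ : Fin 1 => t) ∘ finSumFinEquiv.symm
  have hτ : Set.range τ = insert t (Set.range y') := by
    simp only [τ, Set.range_comp, EquivLike.range_eq_univ, Set.image_univ]
    rw [Set.Sum.elim_range, Set.range_const, Set.union_singleton]
  have hAR : ∀ x ∈ Algebra.adjoin K (insert t (Set.range y')),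
      x ∈ Subring.closure ((↑(K.toSubring ⊓ O.toSubring) : Set F) ∪ Set.range τ) := by
    intro x hx
    induction hx using Algebra.adjoin_induction with
    | mem x hx => rw [← hτ] at hx; exact Subring.subset_closure (Or.inr hx)
    | algebraMap c => exact Subring.subset_closure (Or.inl ⟨c.2, S.hK _ c.2⟩)
    | add x y _ _ hx hy => exact add_mem hx hy
    | mul x y _ _ hx hy => exact mul_mem hx hy
  have hBA : ∀ x ∈ Algebra.adjoin K {t}, x ∈ Algebra.adjoin K (insert t (Set.range y')) :=
    fun x hx => Algebra.adjoin_mono (by simp) hx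
  refine ⟨d + 1, r + r, τ, Fin.append z' z, ⟨?_, ?_, ?_, ?_, ?_, ?_⟩,
    fun i => Fin.natAdd r (Fin.castAdd _ i), fun i => ?_⟩
  · intro i
    refine ⟨trivial, ?_⟩
    have : τ i ∈ Set.range τ := ⟨i, rfl⟩
    rw [hτ] at this
    rcases this with h | ⟨j, h⟩
    · rw [h]; exact S.tO
    · rw [← h]; exact hy' j
  · intro i
    refine ⟨trivial, ?_⟩
    induction i using Fin.addCases with
    | left i => rw [Fin.append_left]; exact hz' i
    | right i => rw [Fin.append_right]; exact hz i
  · have tk : t ∈ IntermediateField.adjoin K {t} := IntermediateField.subset_adjoin _ _ rfl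
    have hqk : ∀ i, qq i ∈ IntermediateField.adjoin K {t} := fun i =>
      IntermediateField.algebra_adjoin_le_adjoin _ _ (hqq i)
    have h1 := affine_indep hyind
      (fun _ => ((⟨t, tk⟩ : IntermediateField.adjoin K {t}) ^ N)⁻¹)
      (fun i => -(((⟨t, tk⟩ : IntermediateField.adjoin K {t}) ^ N)⁻¹ * ⟨qq i, hqk i⟩))
      (fun _ => inv_ne_zero (pow_ne_zero _ fun h => S.ne (congrArg Subtype.val h)))
    have h2 : AlgebraicIndependent (IntermediateField.adjoin K {t}) y' := by
      convert h1 using 1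
      funext i
      have : (t ^ N)⁻¹ * y i + -((t ^ N)⁻¹ * qq i) = y' i := by
        rw [ey i]
        have := pow_ne_zero N S.ne
        field_simp
        ring
      exact this.symm
    have h3 : AlgebraicIndependent K (fun _ : Fin 1 => t) := by
      rw [algebraicIndependent_unique_type_iff]
      exact S.transc
    have h4 := h3.sumElim_of_tower (S := IntermediateField.adjoin K {t}) (by
      rintro _ ⟨_, rfl⟩
      exact ⟨⟨t, tk⟩, rfl⟩) h2
    exact h4.comp _ finSumFinEquiv.symm.injective
  · intro w _
    obtain ⟨f, hf, hf0, hf1⟩ := hsep w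
    rw [hτ]
    refine poly_alg (f := f) (fun i => ?_) hf0 hf1
    have hle : IntermediateField.adjoin K (insert t (Set.range y)) ≤
        IntermediateField.adjoin K (insert t (Set.range y')) := by
      have ht : t ∈ IntermediateField.adjoin K (insert t (Set.range y')) :=
        IntermediateField.subset_adjoin _ _ (Set.mem_insert _ _)
      refine IntermediateField.adjoin_le_iff.2 ?_
      rintro x (rfl | ⟨i, rfl⟩)
      · exact ht
      · show y i ∈ _
        rw [ey i]
        exact add_mem (IntermediateField.algebra_adjoin_le_adjoin _ _ (hBA _ (hqq i)))
          (mul_mem (pow_mem ht _) (IntermediateField.subset_adjoin _ _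
            (Set.mem_insert_of_mem _ ⟨i, rfl⟩)))
    exact hle (hf i)
  · rw [eq_top_iff]
    intro x _
    have hx : x ∈ IntermediateField.adjoin K (G : Set F) := by rw [hG]; trivial
    set L := Subfield.closure ((K : Set F) ∪ Set.range τ ∪ Set.range (Fin.append z' z)) with hL
    have hKL : ∀ c ∈ K, c ∈ L := fun c hc => Subfield.subset_closure (Or.inl (Or.inl hc))
    induction hx using IntermediateField.adjoin_induction with
    | mem x hx =>
      have h1 : gen (G.equivFin ⟨x, hx⟩) ∈ L := by
        refine Subfield.subset_closure (Or.inr ⟨Fin.natAdd r (Fin.natAdd m (G.equivFin ⟨x, hx⟩)), ?_⟩)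
        rw [Fin.append_right]
        simp only [z]
        rw [Fin.append_right]
      simp only [gen, Equiv.symm_apply_apply] at h1
      split_ifs at h1 with h
      · exact h1
      · have := inv_mem h1
        rwa [inv_inv] at this
    | algebraMap c => exact hKL _ c.2
    | add x y _ _ hx hy => exact add_mem (hx trivial) (hy trivial)
    | mul x y _ _ hx hy => exact mul_mem (hx trivial) (hy trivial)
    | inv x _ hx => exact inv_mem (hx trivial)
  · exact exists_system _ z z' q k g (hAR _ (Algebra.subset_adjoin (Set.mem_insert _ _)))
      (fun j => hAR _ (hBA _ (hq j))) e (fun j i => hAR _ (hgA j i)) hg0 hg1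
  · rw [Fin.append_right]
    simp only [z]
    rw [Fin.append_left]

end
end LocalUnif

open LocalUnif in
/-- Theorem 1.8 of the paper. If `P` is a rational discrete place
of the function field `F|K` (i.e. `FP = K` and `v_P F ≅ ℤ`), then `(F|K, P)` is
uniformizable. -/
theorem statement_6
    (F : Type*) [Field F] (K : Subfield F) (O : ValuationSubring F)
    (hff : IsFunctionField K) (htriv : TrivialOn O K)
    (hrat : ResidueEq O K) (hdisc : IsDiscrete O) :
    UnifIn ⊤ K O := by
  obtain ⟨t, S⟩ := exists_setup htriv hrat hdisc
  exact main S hff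
end

section
/- Let (L|K,P) be an extension of valued fields of finite transcendence degree. Then trdeg L|K ≥ trdeg LP|KP + dim_ℚ(ℚ ⊗_ℤ (v_PL/v_PK)). If moreover L|K is a finitely generated field extension and equality holds, then the group v_PL/v_PK and the field extension LP|KP are finitely generated; in particular, if P is trivial on K, then v_PL is a finitely generated free abelian group (a direct sum of finitely many copies of ℤ) and LP is a finitely generated field extension of K. -/
namespace LocalUnif

section Aux
variable {L : Type*} [Field L] {K : Subfield L} {O : ValuationSubring L}

lemma inMax_iff (z : L) : InMax O z ↔ O.valuation z < 1 := by
  rw [← ValuationSubring.mem_nonunits_iff, ValuationSubring.mem_nonunits_iff_or]; rfl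

lemma isVUnit_iff (z : L) : IsVUnit O z ↔ O.valuation z = 1 := by
  unfold IsVUnit
  constructor
  · rintro ⟨h0, h1, h2⟩
    rw [← ValuationSubring.valuation_le_one_iff] at h1 h2
    rw [map_inv₀] at h2
    refine le_antisymm h1 ?_
    exact (inv_le_one₀ (by simpa [zero_lt_iff] using h0)).1 h2
  · intro h
    refine ⟨?_, ?_, ?_⟩
    · rintro rfl; simp at h
    · rw [← ValuationSubring.valuation_le_one_iff, h]
    · rw [← ValuationSubring.valuation_le_one_iff, map_inv₀, h, inv_one]

/-- dominance -/
lemma dominant {ι : Type*} (s : Finset ι) (hs : s.Nonempty) (t : ι → L)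
    (h0 : ∀ i ∈ s, t i ≠ 0)
    (hne : ∀ i ∈ s, ∀ j ∈ s, O.valuation (t i) = O.valuation (t j) → i = j) :
    ∃ j ∈ s, ∃ ε : L, O.valuation ε < 1 ∧ ∑ i ∈ s, t i = t j * (1 + ε) := by
  classical
  obtain ⟨j, hj, hmax⟩ := s.exists_max_image (fun i => O.valuation (t i)) hs
  have hvj : O.valuation (t j) ≠ 0 := by simpa using h0 j hj
  refine ⟨j, hj, (∑ i ∈ s.erase j, t i) / t j, ?_, ?_⟩
  · rw [map_div₀, div_lt_one₀ (zero_lt_iff.2 hvj)]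
    refine Valuation.map_sum_lt _ hvj ?_
    intro i hi
    rw [Finset.mem_erase] at hi
    exact lt_of_le_of_ne (hmax i hi.2) (fun h => hi.1 (hne i hi.2 j hj h))
  · rw [← Finset.add_sum_erase s t hj, mul_add, mul_one, mul_div_cancel₀ _ (h0 j hj)]

/-- `z = c x^m u` with `u` a unit in `R`. -/
def Nice (O : ValuationSubring L) (K : Subfield L) {ρ : ℕ} (x : Fin ρ → L) (R : Subring L)
    (z : L) : Prop :=
  ∃ c ∈ K, c ≠ 0 ∧ ∃ m : Fin ρ → ℤ, ∃ u ∈ R, O.valuation u = 1 ∧ z = c * (∏ i, x i ^ m i) * u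

structure GoodRing (O : ValuationSubring L) (K : Subfield L) (R : Subring L) : Prop where
  le : ∀ z ∈ R, O.valuation z ≤ 1
  ground : ∀ z ∈ K, O.valuation z ≤ 1 → z ∈ R
  max : ∀ z, O.valuation z < 1 → z ∈ R
  inv : ∀ z ∈ R, O.valuation z = 1 → z⁻¹ ∈ R

variable {ρ τ : ℕ} {x : Fin ρ → L} {y : Fin τ → L} {R : Subring L}

lemma Nice.mul {z w : L} (hx : ∀ i, x i ≠ 0) (hz : Nice O K x R z) (hw : Nice O K x R w) :
    Nice O K x R (z * w) := by
  obtain ⟨c, hc, hc0, m, u, hu, hvu, rfl⟩ := hz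
  obtain ⟨c', hc', hc0', m', u', hu', hvu', rfl⟩ := hw
  refine ⟨c * c', mul_mem hc hc', mul_ne_zero hc0 hc0', m + m', u * u', mul_mem hu hu',
    by simp [hvu, hvu'], ?_⟩
  simp only [Pi.add_apply, zpow_add₀ (hx _), Finset.prod_mul_distrib]
  ring

lemma Nice.inv {z : L} (hR : GoodRing O K R) (hz : Nice O K x R z) :
    Nice O K x R z⁻¹ := by
  obtain ⟨c, hc, hc0, m, u, hu, hvu, rfl⟩ := hz
  refine ⟨c⁻¹, inv_mem hc, inv_ne_zero hc0, -m, u⁻¹, hR.inv _ hu hvu, by simp [hvu], ?_⟩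
  simp only [Pi.neg_apply, zpow_neg, Finset.prod_inv_distrib, mul_inv_rev]; ring

lemma Nice.ne_zero {z : L} (hx : ∀ i, x i ≠ 0) (hz : Nice O K x R z) : z ≠ 0 := by
  obtain ⟨c, hc, hc0, m, u, hu, hvu, rfl⟩ := hz
  refine mul_ne_zero (mul_ne_zero hc0 ?_) (by rintro rfl; simp at hvu)
  exact Finset.prod_ne_zero_iff.2 (fun i _ => zpow_ne_zero _ (hx i))

lemma expo_unique (hx : ValIndepMod O K x) {c c' : L} (hc : c ∈ K) (hc' : c' ∈ K)
    (hc0 : c ≠ 0) (hc0' : c' ≠ 0) (m m' : Fin ρ → ℤ)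
    (h : O.valuation (c * ∏ i, x i ^ m i) = O.valuation (c' * ∏ i, x i ^ m' i)) : m = m' := by
  have := hx.2 (m - m') ⟨c' / c, div_mem hc' hc, div_ne_zero hc0' hc0, ?_⟩
  · exact sub_eq_zero.1 this
  · rw [isVUnit_iff]
    have hp : ∀ m : Fin ρ → ℤ, (∏ i, x i ^ m i) ≠ 0 := fun m =>
      Finset.prod_ne_zero_iff.2 (fun i _ => zpow_ne_zero _ (hx.1 i))
    have : (∏ i, x i ^ (m - m') i) / (c' / c) =
        (c * ∏ i, x i ^ m i) / (c' * ∏ i, x i ^ m' i) := by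
      simp only [Pi.sub_apply, zpow_sub₀ (hx.1 _), Finset.prod_div_distrib]
      have := hp m'
      field_simp
    rw [this, map_div₀, h, div_self]
    exact (Valuation.ne_zero_iff _).2 (mul_ne_zero hc0' (hp m'))

lemma nice_y (hy : ResIndep O K y) (hR : GoodRing O K R) (hRy : ∀ i, y i ∈ R)
    (g : MvPolynomial (Fin τ) K) (hg : g ≠ 0) :
    ∃ c ∈ K, c ≠ 0 ∧ ∃ u ∈ R, O.valuation u = 1 ∧ MvPolynomial.aeval y g = c * u := by
  classical
  have hs : g.support.Nonempty := by simpa using hg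
  obtain ⟨j, hj, hmax⟩ := g.support.exists_max_image
    (fun i => O.valuation ((g.coeff i : K) : L)) hs
  have hj0 : ((g.coeff j : K) : L) ≠ 0 := by
    simpa using MvPolynomial.mem_support_iff.1 hj
  set c : L := ((g.coeff j : K) : L) with hc
  have hvc : O.valuation c ≠ 0 := by simpa using hj0
  set p : MvPolynomial (Fin τ) L := MvPolynomial.C c⁻¹ * MvPolynomial.map K.subtype g with hp
  have hcoef : ∀ m, p.coeff m = c⁻¹ * ((g.coeff m : K) : L) := by
    intro m; simp [hp, MvPolynomial.coeff_map]
  have hK : ∀ m, p.coeff m ∈ K := by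
    intro m; rw [hcoef]; exact mul_mem (inv_mem (g.coeff j).2) (g.coeff m).2
  have hO : ∀ m, O.valuation (p.coeff m) ≤ 1 := by
    intro m
    rw [hcoef, map_mul, map_inv₀, inv_mul_le_one₀ (zero_lt_iff.2 hvc)]
    by_cases hm : m ∈ g.support
    · exact hmax m hm
    · rw [MvPolynomial.notMem_support_iff.1 hm]; simp
  have hev : MvPolynomial.eval y p ∈ R := by
    rw [MvPolynomial.eval_eq]
    refine sum_mem fun m _ => mul_mem (hR.ground _ (hK m) (hO m)) (prod_mem fun i _ => pow_mem (hRy i) _)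
  refine ⟨c, (g.coeff j).2, hj0, MvPolynomial.eval y p, hev, ?_, ?_⟩
  · have := hy.2 p (fun m => ⟨hK m, (ValuationSubring.valuation_le_one_iff _ _).1 (hO m)⟩)
      ⟨j, by rw [isVUnit_iff, hcoef, ← hc, inv_mul_cancel₀ hj0, map_one]⟩
    rw [inMax_iff, not_lt] at this
    exact le_antisymm (hR.le _ hev) this
  · rw [hp, map_mul, MvPolynomial.eval_C, MvPolynomial.eval_map, mul_inv_cancel_left₀ hj0]
    rfl

lemma nice_poly (hx : ValIndepMod O K x) (hy : ResIndep O K y) (hR : GoodRing O K R)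
    (hRy : ∀ i, y i ∈ R)
    (p : MvPolynomial (Fin ρ ⊕ Fin τ) K) (hp : p ≠ 0) :
    Nice O K x R (MvPolynomial.aeval (Sum.elim x y) p) := by
  classical
  set P := MvPolynomial.sumAlgEquiv K (Fin ρ) (Fin τ) p with hP
  have hP0 : P ≠ 0 := by simpa [hP] using hp
  have hev : MvPolynomial.aeval (Sum.elim x y) p =
      MvPolynomial.eval₂ (MvPolynomial.aeval y : MvPolynomial (Fin τ) K →ₐ[K] L).toRingHom x P := by
    have : (MvPolynomial.aeval (Sum.elim x y) : _ →ₐ[K] L).toRingHom =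
      (MvPolynomial.eval₂Hom (MvPolynomial.aeval y : MvPolynomial (Fin τ) K →ₐ[K] L).toRingHom x).comp
        (MvPolynomial.sumAlgEquiv K (Fin ρ) (Fin τ)).toAlgHom.toRingHom := by
      ext i
      · simp
      · rcases i with i | i <;> simp
    exact DFunLike.congr_fun this p
  rw [hev, MvPolynomial.eval₂_eq']
  have hc : ∀ m ∈ P.support, P.coeff m ≠ 0 := fun m hm => MvPolynomial.mem_support_iff.1 hm
  have key := fun m (hm : m ∈ P.support) => nice_y hy hR hRy (P.coeff m) (hc m hm)
  have key2 : ∀ m ∈ P.support, ∃ c ∈ K, c ≠ 0 ∧ ∃ u ∈ R, O.valuation u = 1 ∧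
      (MvPolynomial.aeval y : MvPolynomial (Fin τ) K →ₐ[K] L).toRingHom (P.coeff m) *
        ∏ i, x i ^ m i = c * (∏ i, x i ^ ((m i : ℕ) : ℤ)) * u := by
    intro m hm
    obtain ⟨c, hcK, hc0, u, hu, hvu, h⟩ := key m hm
    refine ⟨c, hcK, hc0, u, hu, hvu, ?_⟩
    have h' : (MvPolynomial.aeval y : MvPolynomial (Fin τ) K →ₐ[K] L).toRingHom (P.coeff m) = c * u := h
    rw [h']; simp only [zpow_natCast]; ring
  have hN : ∀ m ∈ P.support, Nice O K x R
      ((MvPolynomial.aeval y : MvPolynomial (Fin τ) K →ₐ[K] L).toRingHom (P.coeff m) *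
        ∏ i, x i ^ m i) := by
    intro m hm
    obtain ⟨c, hcK, hc0, u, hu, hvu, h⟩ := key2 m hm
    exact ⟨c, hcK, hc0, _, u, hu, hvu, h⟩
  obtain ⟨j, hj, ε, hε, hsum⟩ := dominant (O := O) P.support (by simpa using hP0)
    (fun m => (MvPolynomial.aeval y : MvPolynomial (Fin τ) K →ₐ[K] L).toRingHom (P.coeff m) *
        ∏ i, x i ^ m i) (fun m hm => (hN m hm).ne_zero hx.1) (by
    intro m hm m' hm' h
    obtain ⟨c, hcK, hc0, u, hu, hvu, e⟩ := key2 m hm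
    obtain ⟨c', hcK', hc0', u', hu', hvu', e'⟩ := key2 m' hm'
    simp only [e, e'] at h
    rw [map_mul, hvu, mul_one, map_mul _ _ u', hvu', mul_one] at h
    have := expo_unique hx hcK hcK' hc0 hc0' _ _ h
    ext i
    exact_mod_cast congrFun this i)
  rw [hsum]
  refine (hN j hj).mul hx.1 ⟨1, one_mem _, one_ne_zero, 0, 1 + ε, add_mem (one_mem _) (hR.max _ hε), ?_, by simp⟩
  rw [Valuation.map_add_eq_of_lt_left _ (by simpa using hε), map_one]

lemma goodRing_self : GoodRing O K O.toSubring where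
  le z hz := (ValuationSubring.valuation_le_one_iff _ _).2 hz
  ground z _ hz := (ValuationSubring.valuation_le_one_iff _ _).1 hz
  max z hz := (ValuationSubring.valuation_le_one_iff _ _).1 hz.le
  inv z _ hz := (ValuationSubring.valuation_le_one_iff _ _).1 (by simp [hz])

lemma algIndep (hx : ValIndepMod O K x) (hy : ResIndep O K y) :
    AlgebraicIndependent K (Sum.elim x y) := by
  rw [algebraicIndependent_iff]
  intro p hp
  by_contra h
  exact (nice_poly hx hy goodRing_self hy.1 p h).ne_zero hx.1 hp

lemma nice_field (hx : ValIndepMod O K x) (hy : ResIndep O K y) (hR : GoodRing O K R)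
    (hRy : ∀ i, y i ∈ R) (z : L) (hz : z ∈ IntermediateField.adjoin K (Set.range (Sum.elim x y)))
    (hz0 : z ≠ 0) : Nice O K x R z := by
  obtain ⟨r, s, rfl⟩ := (IntermediateField.mem_adjoin_range_iff K _ _).1 hz
  have hr : r ≠ 0 := by rintro rfl; simp at hz0
  have hs : s ≠ 0 := by rintro rfl; simp at hz0
  rw [div_eq_mul_inv]
  exact (nice_poly hx hy hR hRy r hr).mul hx.1 ((nice_poly hx hy hR hRy s hs).inv hR)

lemma trdeg_le {d : ℕ} (hd : TrdegEq K d) (hx : ValIndepMod O K x) (hy : ResIndep O K y) :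
    ρ + τ ≤ d := by
  obtain ⟨t, ht⟩ := hd
  have h1 := ht.lift_cardinalMk_eq_trdeg
  have h2 := (algIndep hx hy).lift_cardinalMk_le_trdeg
  rw [← h1] at h2
  simp at h2
  exact_mod_cast h2

lemma finite_ext (hd : TrdegEq K (ρ + τ)) (hx : ValIndepMod O K x) (hy : ResIndep O K y)
    (hfg : ∃ S : Finset L, IntermediateField.adjoin ↥K (S : Set L) = ⊤) :
    Module.Finite (IntermediateField.adjoin K (Set.range (Sum.elim x y))) L := by
  obtain ⟨t, ht⟩ := hd
  have h1 := ht.lift_cardinalMk_eq_trdeg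
  have hb : IsTranscendenceBasis K (Sum.elim x y) := by
    refine (algIndep hx hy).isTranscendenceBasis_of_lift_trdeg_le_of_finite ?_
    rw [← h1]; simp
  have := hb.isAlgebraic_field
  obtain ⟨S, hS⟩ := hfg
  set F := IntermediateField.adjoin K (Set.range (Sum.elim x y))
  have hfin : FiniteDimensional F (IntermediateField.adjoin F (S : Set L)) :=
    IntermediateField.finiteDimensional_adjoin (fun z _ => (Algebra.IsAlgebraic.isAlgebraic z).isIntegral)
  have htop : IntermediateField.adjoin F (S : Set L) = ⊤ := by
    rw [← IntermediateField.restrictScalars_eq_top_iff (K := K), IntermediateField.restrictScalars_adjoin_eq_sup, hS]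
    simp
  rw [htop] at hfin
  exact Module.Finite.equiv (IntermediateField.topEquiv (F := F) (E := L)).toLinearEquiv

end Aux
end LocalUnif
namespace LocalUnif

section Aux2
variable {L : Type*} [Field L] {K : Subfield L} {O : ValuationSubring L}
variable {ρ τ : ℕ} {x : Fin ρ → L} {y : Fin τ → L} {R : Subring L}

/-- The units whose value lies in `v K + ∑ ℤ v (x i)`. -/
def valSub (O : ValuationSubring L) (K : Subfield L) (x : Fin ρ → L) (hx : ∀ i, x i ≠ 0) :
    Subgroup Lˣ where
  carrier := {z | ∃ c ∈ K, c ≠ 0 ∧ ∃ m : Fin ρ → ℤ,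
    O.valuation (z : L) = O.valuation (c * ∏ i, x i ^ m i)}
  mul_mem' := by
    rintro a b ⟨c, hc, hc0, m, h⟩ ⟨c', hc', hc0', m', h'⟩
    refine ⟨c * c', mul_mem hc hc', mul_ne_zero hc0 hc0', m + m', ?_⟩
    rw [Units.val_mul, map_mul, h, h', ← map_mul]
    simp only [Pi.add_apply, zpow_add₀ (hx _), Finset.prod_mul_distrib]
    congr 1; ring
  one_mem' := ⟨1, one_mem _, one_ne_zero, 0, by simp⟩
  inv_mem' := by
    rintro a ⟨c, hc, hc0, m, h⟩
    refine ⟨c⁻¹, inv_mem hc, inv_ne_zero hc0, -m, ?_⟩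
    rw [Units.val_inv_eq_inv_val, map_inv₀, h, ← map_inv₀]
    simp only [Pi.neg_apply, zpow_neg, Finset.prod_inv_distrib, mul_inv]

lemma finite_valSub (hx : ∀ i, x i ≠ 0) (F : IntermediateField K L) [Module.Finite F L]
    (hF : ∀ z ∈ F, z ≠ 0 → Nice O K x R z) : Finite (Lˣ ⧸ valSub O K x hx) := by
  classical
  have hli : LinearIndependent F (fun q : Lˣ ⧸ valSub O K x hx => ((q.out : Lˣ) : L)) := by
    rw [linearIndependent_iff']
    intro s g hg
    by_contra! hcon
    obtain ⟨i, his, hi⟩ := hcon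
    have hsum : ∑ i ∈ s.filter (fun i => g i ≠ 0), ((g i : F) : L) * ((i.out : Lˣ) : L) = 0 := by
      rw [Finset.sum_filter_of_ne]
      · exact hg
      · intro j _ hj h0
        simp [h0] at hj
    obtain ⟨j, hj, ε, hε, hs⟩ := dominant (O := O) (s.filter (fun i => g i ≠ 0))
      ⟨i, by simp [his, hi]⟩ (fun i => ((g i : F) : L) * ((i.out : Lˣ) : L)) (by
        intro j hj
        simpa using (Finset.mem_filter.1 hj).2) (by
        intro a ha b hb h
        have ha0 : ((g a : F) : L) ≠ 0 := by simpa using (Finset.mem_filter.1 ha).2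
        have hb0 : ((g b : F) : L) ≠ 0 := by simpa using (Finset.mem_filter.1 hb).2
        obtain ⟨c, hc, hc0, m, u, hu, hvu, e⟩ := hF ((g b : F) / (g a : F) : L)
          (div_mem (g b).2 (g a).2) (div_ne_zero hb0 ha0)
        rw [← QuotientGroup.out_eq' a, ← QuotientGroup.out_eq' b]
        refine (QuotientGroup.eq.2 ?_).symm
        refine ⟨c, hc, hc0, m, ?_⟩
        have e2 : O.valuation (c * ∏ i, x i ^ m i) = O.valuation ((g b : F) / (g a : F) : L) := by
          rw [e, map_mul _ _ u, hvu, mul_one]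
        rw [e2]
        have hva : O.valuation ((g a : F) : L) ≠ 0 := (Valuation.ne_zero_iff _).2 ha0
        have hvb : O.valuation ((b.out : Lˣ) : L) ≠ 0 := (Valuation.ne_zero_iff _).2 (Units.ne_zero _)
        simp only [map_mul] at h
        rw [Units.val_mul, Units.val_inv_eq_inv_val, map_mul, map_inv₀, map_div₀,
          eq_div_iff hva, inv_mul_eq_div, div_mul_eq_mul_div, div_eq_iff hvb, mul_comm, h])
    rw [hsum] at hs
    have h1 : (1 + ε) ≠ 0 := by
      intro h
      have := Valuation.map_add_eq_of_lt_left O.valuation (x := 1) (y := ε) (by simpa using hε)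
      rw [h] at this; simp at this
    have hj0 : ((g j : F) : L) ≠ 0 := by simpa using (Finset.mem_filter.1 hj).2
    exact mul_ne_zero (mul_ne_zero hj0 (Units.ne_zero _)) h1 hs.symm
  exact hli.finite

lemma value_fg (hx : ∀ i, x i ≠ 0) (F : IntermediateField K L) [Module.Finite F L]
    (hF : ∀ z ∈ F, z ≠ 0 → Nice O K x R z) :
    ∃ (N : ℕ) (a : Fin N → L), (∀ i, a i ≠ 0) ∧
        ∀ z : L, z ≠ 0 → ∃ (e : Fin N → ℤ) (c : L), c ∈ K ∧ c ≠ 0 ∧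
          IsVUnit O (z / ((∏ i, a i ^ e i) * c)) := by
  classical
  have := finite_valSub hx F hF
  have := Fintype.ofFinite (Lˣ ⧸ valSub O K x hx)
  let E := Fintype.equivFin (Fin ρ ⊕ (Lˣ ⧸ valSub O K x hx))
  let A : Fin ρ ⊕ (Lˣ ⧸ valSub O K x hx) → L := Sum.elim x (fun q => ((q.out : Lˣ) : L))
  have hA : ∀ i, A i ≠ 0 := by
    rintro (i | i)
    · exact hx i
    · exact Units.ne_zero _
  refine ⟨_, A ∘ E.symm, fun i => hA _, fun z hz => ?_⟩
  let q : Lˣ ⧸ valSub O K x hx := QuotientGroup.mk (Units.mk0 z hz)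
  have hq : (q.out)⁻¹ * Units.mk0 z hz ∈ valSub O K x hx := by
    rw [← QuotientGroup.eq, QuotientGroup.out_eq']
  obtain ⟨c, hc, hc0, m, h⟩ := hq
  refine ⟨Sum.elim m (Pi.single q 1) ∘ E.symm, c, hc, hc0, ?_⟩
  have hprod : ∏ i, (A ∘ E.symm) i ^ (Sum.elim m (Pi.single q 1) ∘ E.symm : _ → ℤ) i =
      (∏ i, x i ^ m i) * ((q.out : Lˣ) : L) := by
    rw [← E.prod_comp]
    simp only [Function.comp, Equiv.symm_apply_apply]
    rw [Fintype.prod_sum_type]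
    congr 1
    rw [Finset.prod_eq_single q]
    · simp [A]
    · intro b _ hb; simp [Pi.single_eq_of_ne hb]
    · simp
  rw [hprod, isVUnit_iff]
  have h0 : O.valuation (c * ∏ i, x i ^ m i) ≠ 0 := (Valuation.ne_zero_iff _).2
    (mul_ne_zero hc0 (Finset.prod_ne_zero_iff.2 (fun i _ => zpow_ne_zero _ (hx i))))
  have e : z / ((∏ i, x i ^ m i) * ((q.out : Lˣ) : L) * c) =
      (((q.out)⁻¹ * Units.mk0 z hz : Lˣ) : L) / (c * ∏ i, x i ^ m i) := by
    rw [Units.val_mul, Units.val_inv_eq_inv_val, Units.val_mk0, inv_mul_eq_div, div_div]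
    congr 1; ring
  rw [e, map_div₀, h, div_self h0]

lemma value_free (hT : TrivialOn O K) {N : ℕ} {a : Fin N → L} (ha : ∀ i, a i ≠ 0)
    (h : ∀ z : L, z ≠ 0 → ∃ (e : Fin N → ℤ) (c : L), c ∈ K ∧ c ≠ 0 ∧
          IsVUnit O (z / ((∏ i, a i ^ e i) * c))) :
    ∃ (N : ℕ) (a : Fin N → L), (∀ i, a i ≠ 0) ∧
          (∀ z : L, z ≠ 0 → ∃ e : Fin N → ℤ, IsVUnit O (z / ∏ i, a i ^ e i)) ∧
          ∀ e : Fin N → ℤ, IsVUnit O (∏ i, a i ^ e i) → e = 0 := by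
  classical
  let G := Additive (O.ValueGroup)ˣ
  let w : Lˣ →* (O.ValueGroup)ˣ := Units.map (O.valuation : L →* O.ValueGroup)
  have hw : ∀ z : Lˣ, ((w z : (O.ValueGroup)ˣ) : O.ValueGroup) = O.valuation (z : L) := fun z => rfl
  have hsurj : ∀ g : G, ∃ z : Lˣ, Additive.ofMul (w z) = g := by
    intro g
    obtain ⟨z, hz⟩ := O.valuation_surjective ((Additive.toMul g : (O.ValueGroup)ˣ) : O.ValueGroup)
    have hz0 : z ≠ 0 := by
      rintro rfl
      rw [map_zero] at hz
      exact Units.ne_zero _ hz.symm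
    refine ⟨Units.mk0 z hz0, ?_⟩
    apply Additive.toMul.injective
    apply Units.ext
    exact hz
  have hprod : ∀ {n : ℕ} (b : Fin n → Lˣ) (e : Fin n → ℤ),
      (((∏ i, b i ^ e i : Lˣ)) : L) = ∏ i, (b i : L) ^ e i := by
    intro n b e; simp
  have hsum : ∀ {n : ℕ} (b : Fin n → Lˣ) (e : Fin n → ℤ),
      (∑ i, e i • (Additive.ofMul (w (b i)) : G)) = Additive.ofMul (w (∏ i, b i ^ e i)) := by
    intro n b e
    rw [map_prod, ofMul_prod]
    refine Finset.sum_congr rfl fun i _ => ?_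
    rw [map_zpow, ofMul_zpow]
  have hfin : Module.Finite ℤ G := by
    refine ⟨⟨Finset.univ.image (fun i => (Additive.ofMul (w (Units.mk0 (a i) (ha i))) : G)), ?_⟩⟩
    rw [eq_top_iff]
    rintro g -
    obtain ⟨z, rfl⟩ := hsurj g
    obtain ⟨e, c, hc, hc0, hu⟩ := h z z.ne_zero
    have hvc : O.valuation c = 1 :=
      (isVUnit_iff _).1 ⟨hc0, (hT c hc).1, (hT c hc).2⟩
    have : w z = w (∏ i, (Units.mk0 (a i) (ha i)) ^ e i) := by
      apply Units.ext
      rw [hw, hw, hprod]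
      rw [isVUnit_iff, map_div₀, map_mul _ _ c, hvc, mul_one] at hu
      have hne : O.valuation (∏ i, a i ^ e i) ≠ 0 := (Valuation.ne_zero_iff _).2
        (Finset.prod_ne_zero_iff.2 (fun i _ => zpow_ne_zero _ (ha i)))
      exact (div_eq_one_iff_eq hne).1 hu
    rw [this, ← hsum]
    exact sum_mem fun i _ => Submodule.smul_mem _ _ (Submodule.subset_span (by simp))
  have htf : Module.IsTorsionFree ℤ G := inferInstance
  have : Module.Free ℤ G := Module.free_of_finite_type_torsion_free'
  let B := Module.finBasis ℤ G
  choose b hb using fun i => hsurj (B i)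
  refine ⟨_, fun i => (b i : L), fun i => (b i).ne_zero, ?_, ?_⟩
  · intro z hz
    refine ⟨fun i => B.repr (Additive.ofMul (w (Units.mk0 z hz))) i, ?_⟩
    have h1 := B.sum_repr (Additive.ofMul (w (Units.mk0 z hz)))
    simp only [← hb] at h1
    rw [hsum] at h1
    have h2 := congrArg (fun g : G => ((Additive.toMul g : (O.ValueGroup)ˣ) : O.ValueGroup)) h1
    simp only [toMul_ofMul, hw, hprod, Units.val_mk0] at h2
    rw [isVUnit_iff, map_div₀, h2, div_self ((Valuation.ne_zero_iff _).2 hz)]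
  · intro e he
    rw [isVUnit_iff, ← hprod, ← hw] at he
    have h1 : ∑ i, e i • B i = 0 := by
      simp only [← hb]
      rw [hsum]
      have : w (∏ i, b i ^ e i) = 1 := Units.ext he
      rw [this]; rfl
    funext i
    exact Fintype.linearIndependent_iff.1 B.linearIndependent e h1 i

end Aux2
end LocalUnif
namespace LocalUnif

section Aux3
variable {L : Type*} [Field L] {K : Subfield L} {O : ValuationSubring L}
variable {ρ τ : ℕ} {x : Fin ρ → L} {y : Fin τ → L} {R : Subring L}

/-- elements of `O` with residue in `k`. -/
def resRing (O : ValuationSubring L) (k : Subfield (IsLocalRing.ResidueField O)) : Subring L :=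
  (k.toSubring.comap (IsLocalRing.residue O)).map O.subtype

lemma mem_resRing {k : Subfield (IsLocalRing.ResidueField O)} {z : L} :
    z ∈ resRing O k ↔ ∃ h : z ∈ O, IsLocalRing.residue O ⟨z, h⟩ ∈ k := by
  unfold resRing
  rw [Subring.mem_map]
  constructor
  · rintro ⟨w, hw, rfl⟩
    exact ⟨w.2, hw⟩
  · rintro ⟨h, hz⟩
    exact ⟨⟨z, h⟩, hz, rfl⟩

lemma residue_eq_zero_iff' (z : O) : IsLocalRing.residue O z = 0 ↔ O.valuation (z : L) < 1 := by
  rw [IsLocalRing.residue_eq_zero_iff, ValuationSubring.valuation_lt_one_iff]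

lemma goodRing_res {k : Subfield (IsLocalRing.ResidueField O)}
    (hK : ∀ z : O, (z : L) ∈ K → IsLocalRing.residue O z ∈ k) : GoodRing O K (resRing O k) where
  le z hz := by
    obtain ⟨h, _⟩ := mem_resRing.1 hz
    exact (ValuationSubring.valuation_le_one_iff _ _).2 h
  ground z hz hv := by
    exact mem_resRing.2 ⟨(ValuationSubring.valuation_le_one_iff _ _).1 hv, hK ⟨z, _⟩ hz⟩
  max z hz := by
    have h : z ∈ O := (ValuationSubring.valuation_le_one_iff _ _).1 hz.le
    refine mem_resRing.2 ⟨h, ?_⟩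
    rw [(residue_eq_zero_iff' ⟨z, h⟩).2 hz]
    exact zero_mem _
  inv z hz hv := by
    obtain ⟨h, hk⟩ := mem_resRing.1 hz
    have h' : z⁻¹ ∈ O := (ValuationSubring.valuation_le_one_iff _ _).1 (by simp [hv])
    refine mem_resRing.2 ⟨h', ?_⟩
    have h0 : z ≠ 0 := by rintro rfl; simp at hv
    have : IsLocalRing.residue O ⟨z, h⟩ * IsLocalRing.residue O ⟨z⁻¹, h'⟩ = 1 := by
      rw [← map_mul, ← map_one (IsLocalRing.residue O)]
      congr 1
      exact Subtype.ext (mul_inv_cancel₀ h0)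
    rw [eq_inv_of_mul_eq_one_right this]
    exact inv_mem hk

lemma unit_mem (hx : ValIndepMod O K x) (hR : GoodRing O K R) {z : L} (hz : Nice O K x R z)
    (hv : O.valuation z = 1) : z ∈ R := by
  obtain ⟨c, hc, hc0, m, u, hu, hvu, rfl⟩ := hz
  rw [map_mul, hvu, mul_one] at hv
  have : m = 0 := expo_unique hx hc (one_mem K) hc0 one_ne_zero m 0 (by rw [hv]; simp)
  subst this
  simp only [Pi.zero_apply, zpow_zero, Finset.prod_const_one, mul_one] at hv ⊢
  exact mul_mem (hR.ground _ hc hv.le) hu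

lemma field_res (hx : ValIndepMod O K x) {k : Subfield (IsLocalRing.ResidueField O)}
    (hR : GoodRing O K (resRing O k)) (F : IntermediateField K L)
    (hF : ∀ z ∈ F, z ≠ 0 → Nice O K x (resRing O k) z) (z : O) (hz : (z : L) ∈ F) :
    IsLocalRing.residue O z ∈ k := by
  have hmem : (z : L) ∈ resRing O k := by
    rcases O.valuation_lt_one_or_eq_one z with h | h
    · exact hR.max _ h
    · refine unit_mem hx hR (hF _ hz ?_) h
      intro h0; rw [h0] at h; simp at h
  obtain ⟨_, h⟩ := mem_resRing.1 hmem
  exact h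

lemma res_finite {k : Subfield (IsLocalRing.ResidueField O)} (F : IntermediateField K L)
    [Module.Finite F L] (hF : ∀ z : O, (z : L) ∈ F → IsLocalRing.residue O z ∈ k) :
    ∃ (n : ℕ) (β : Fin n → O),
      Submodule.span k (Set.range fun i => IsLocalRing.residue O (β i)) = ⊤ := by
  classical
  let B := Module.Basis.ofVectorSpace k (IsLocalRing.ResidueField O)
  choose β hβ using fun i => IsLocalRing.residue_surjective (R := O) (B i)
  have hli : LinearIndependent F (fun i => ((β i : O) : L)) := by
    rw [linearIndependent_iff']
    intro s g hg
    by_contra! hcon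
    obtain ⟨i, his, hi⟩ := hcon
    obtain ⟨j, hj, hmax⟩ := s.exists_max_image (fun i => O.valuation ((g i : F) : L)) ⟨i, his⟩
    have hi0 : O.valuation ((g i : F) : L) ≠ 0 := (Valuation.ne_zero_iff _).2 (by simpa using hi)
    have hj0 : O.valuation ((g j : F) : L) ≠ 0 := by
      intro h
      have := hmax i his
      rw [h] at this
      exact hi0 (le_antisymm this zero_le')
    have hgj0 : ((g j : F) : L) ≠ 0 := (Valuation.ne_zero_iff _).1 hj0
    have hO : ∀ i ∈ s, ((g i : F) : L) / ((g j : F) : L) ∈ O := by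
      intro i hi
      rw [← ValuationSubring.valuation_le_one_iff, map_div₀, div_le_one₀ (zero_lt_iff.2 hj0)]
      exact hmax i hi
    let r : _ → O := fun i => if h : i ∈ s then ⟨((g i : F) : L) / ((g j : F) : L), hO i h⟩ else 0
    have hr : ∀ i ∈ s, ((r i : O) : L) = ((g i : F) : L) / ((g j : F) : L) := by
      intro i hi; simp [r, hi]
    have hrF : ∀ i, ((r i : O) : L) ∈ F := by
      intro i
      by_cases h : i ∈ s
      · rw [hr i h]; exact div_mem (g i).2 (g j).2
      · simp [r, h]
    have hsum : ∑ i ∈ s, r i * β i = 0 := by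
      apply Subtype.ext
      have : ((∑ i ∈ s, r i * β i : O) : L) = ∑ i ∈ s, ((r i : O) : L) * ((β i : O) : L) := by
        push_cast; rfl
      rw [this]
      have h2 : ∑ i ∈ s, ((r i : O) : L) * ((β i : O) : L) =
          (∑ i ∈ s, g i • ((β i : O) : L)) / ((g j : F) : L) := by
        rw [Finset.sum_div]
        refine Finset.sum_congr rfl fun i hi => ?_
        rw [hr i hi, IntermediateField.smul_def, smul_eq_mul]; ring
      rw [h2, hg, zero_div]; rfl
    have hres := congrArg (IsLocalRing.residue O) hsum
    rw [map_sum, map_zero] at hres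
    have := linearIndependent_iff'.1 B.linearIndependent s
      (fun i => ⟨IsLocalRing.residue O (r i), hF _ (hrF i)⟩) (by
        rw [← hres]
        refine Finset.sum_congr rfl fun i _ => ?_
        rw [map_mul, hβ]; rfl) j hj
    have h1 : IsLocalRing.residue O (r j) = 0 := congrArg Subtype.val this
    rw [residue_eq_zero_iff', hr j hj, div_self hgj0, map_one] at h1
    exact lt_irrefl _ h1
  have hfin := hli.finite
  have := Fintype.ofFinite (Module.Basis.ofVectorSpaceIndex k (IsLocalRing.ResidueField O))
  let E := Fintype.equivFin (Module.Basis.ofVectorSpaceIndex k (IsLocalRing.ResidueField O))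
  refine ⟨_, β ∘ E.symm, ?_⟩
  have : (Set.range fun i => IsLocalRing.residue O ((β ∘ E.symm) i)) = Set.range B := by
    rw [← E.symm.surjective.range_comp]
    congr 1; funext i; simp [hβ]
  rw [this, B.span_eq]

/-- The residue images of `K ∩ O`. -/
def resK (O : ValuationSubring L) (K : Subfield L) : Set (IsLocalRing.ResidueField O) :=
  {w | ∃ z : O, (z : L) ∈ K ∧ IsLocalRing.residue O z = w}

lemma res_rep {M : ℕ} (γ : Fin M → O)
    (w : IsLocalRing.ResidueField O)
    (hw : w ∈ Subring.closure (resK O K ∪ Set.range (fun i => IsLocalRing.residue O (γ i)))) :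
    ∃ p : MvPolynomial (Fin M) L, (∀ mo, p.coeff mo ∈ K ∧ p.coeff mo ∈ O) ∧
      ∃ h : MvPolynomial.eval (fun i => (γ i : L)) p ∈ O, IsLocalRing.residue O ⟨_, h⟩ = w := by
  let R0 : Subring O := K.toSubring.comap O.subtype
  let φ : R0 →+* IsLocalRing.ResidueField O := (IsLocalRing.residue O).comp R0.subtype
  have hle : Subring.closure (resK O K ∪ Set.range (fun i => IsLocalRing.residue O (γ i))) ≤
      (MvPolynomial.eval₂Hom φ (fun i => IsLocalRing.residue O (γ i))).range := by
    rw [Subring.closure_le]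
    rintro _ (⟨z, hz, rfl⟩ | ⟨i, rfl⟩)
    · exact ⟨MvPolynomial.C ⟨z, hz⟩, by simp [φ]⟩
    · exact ⟨MvPolynomial.X i, by simp⟩
  obtain ⟨p, hp⟩ := hle hw
  have he : MvPolynomial.eval (fun i => (γ i : L)) (MvPolynomial.map (O.subtype.comp R0.subtype) p)
      = ((MvPolynomial.eval₂ R0.subtype γ p : O) : L) := by
    rw [MvPolynomial.eval_map]
    exact (MvPolynomial.eval₂_comp_left O.subtype R0.subtype γ p).symm
  have hO : MvPolynomial.eval (fun i => (γ i : L))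
      (MvPolynomial.map (O.subtype.comp R0.subtype) p) ∈ O := by
    rw [he]; exact Subtype.property _
  refine ⟨MvPolynomial.map (O.subtype.comp R0.subtype) p, ?_, hO, ?_⟩
  · intro mo
    rw [MvPolynomial.coeff_map]
    exact ⟨(p.coeff mo).2, (p.coeff mo).1.2⟩
  · have : (⟨_, hO⟩ : O) = MvPolynomial.eval₂ R0.subtype γ p :=
      Subtype.ext he
    rw [this, MvPolynomial.eval₂_comp_left]
    exact hp

lemma res_fg {M : ℕ} (γ : Fin M → O)
    (hγ : Subfield.closure (resK O K ∪ Set.range (fun i => IsLocalRing.residue O (γ i))) = ⊤) :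
    ∃ (M : ℕ) (b : Fin M → L), (∀ i, b i ∈ O) ∧
        ∀ z ∈ O, ∃ p q : MvPolynomial (Fin M) L,
          (∀ mo, p.coeff mo ∈ K ∧ p.coeff mo ∈ O) ∧
          (∀ mo, q.coeff mo ∈ K ∧ q.coeff mo ∈ O) ∧
          ¬ InMax O (MvPolynomial.eval b q) ∧
          InMax O (z * MvPolynomial.eval b q - MvPolynomial.eval b p) := by
  refine ⟨M, fun i => (γ i : L), fun i => (γ i).2, fun z hz => ?_⟩
  have hmem : IsLocalRing.residue O ⟨z, hz⟩ ∈
      Subfield.closure (resK O K ∪ Set.range (fun i => IsLocalRing.residue O (γ i))) := by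
    rw [hγ]; trivial
  have hex : ∃ a ∈ Subring.closure (resK O K ∪ Set.range (fun i => IsLocalRing.residue O (γ i))),
      ∃ b ∈ Subring.closure (resK O K ∪ Set.range (fun i => IsLocalRing.residue O (γ i))),
      b ≠ 0 ∧ a / b = IsLocalRing.residue O ⟨z, hz⟩ := by
    obtain ⟨a, ha, b, hb, h⟩ := Subfield.mem_closure_iff.1 hmem
    by_cases h0 : b = 0
    · exact ⟨0, zero_mem _, 1, one_mem _, one_ne_zero, by rw [← h, h0]; simp⟩
    · exact ⟨a, ha, b, hb, h0, h⟩
  obtain ⟨a, ha, b, hb, hb0, h⟩ := hex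
  obtain ⟨p, hp, hpO, hpa⟩ := res_rep γ a ha
  obtain ⟨q, hq, hqO, hqb⟩ := res_rep γ b hb
  refine ⟨p, q, hp, hq, ?_, ?_⟩
  · rw [inMax_iff]
    intro hlt
    apply hb0
    rw [← hqb]
    exact (residue_eq_zero_iff' _).2 hlt
  · rw [inMax_iff]
    have := (residue_eq_zero_iff' (O := O) (⟨z, hz⟩ * ⟨_, hqO⟩ - ⟨_, hpO⟩)).1 (by
      rw [map_sub, map_mul, hqb, hpa, ← h, div_mul_cancel₀ _ hb0, sub_self])
    exact this

lemma residue_part (hx : ValIndepMod O K x) (hy : ResIndep O K y)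
    [Module.Finite (IntermediateField.adjoin K (Set.range (Sum.elim x y))) L] :
    ∃ (M : ℕ) (b : Fin M → L), (∀ i, b i ∈ O) ∧
        ∀ z ∈ O, ∃ p q : MvPolynomial (Fin M) L,
          (∀ mo, p.coeff mo ∈ K ∧ p.coeff mo ∈ O) ∧
          (∀ mo, q.coeff mo ∈ K ∧ q.coeff mo ∈ O) ∧
          ¬ InMax O (MvPolynomial.eval b q) ∧
          InMax O (z * MvPolynomial.eval b q - MvPolynomial.eval b p) := by
  let yO : Fin τ → O := fun i => ⟨y i, hy.1 i⟩
  let k := Subfield.closure (resK O K ∪ Set.range (fun i => IsLocalRing.residue O (yO i)))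
  have hR : GoodRing O K (resRing O k) := goodRing_res (fun z hz =>
    Subfield.subset_closure (Or.inl ⟨z, hz, rfl⟩))
  have hRy : ∀ i, y i ∈ resRing O k := fun i => mem_resRing.2
    ⟨hy.1 i, Subfield.subset_closure (Or.inr ⟨i, rfl⟩)⟩
  obtain ⟨n, β, hβ⟩ := res_finite (k := k) _
    (field_res hx hR _ (fun z hz hz0 => nice_field hx hy hR hRy z hz hz0))
  refine res_fg (M := τ + n) (Sum.elim yO β ∘ finSumFinEquiv.symm) ?_
  set k2 := Subfield.closure (resK O K ∪ Set.range (fun i => IsLocalRing.residue O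
    ((Sum.elim yO β ∘ finSumFinEquiv.symm) i))) with hk2
  have hyk : ∀ i, IsLocalRing.residue O (yO i) ∈ k2 := fun i =>
    Subfield.subset_closure (Or.inr ⟨finSumFinEquiv (Sum.inl i), by simp⟩)
  have hβk : ∀ i, IsLocalRing.residue O (β i) ∈ k2 := fun i =>
    Subfield.subset_closure (Or.inr ⟨finSumFinEquiv (Sum.inr i), by simp⟩)
  have hkk : k ≤ k2 := by
    refine Subfield.closure_le.2 ?_
    rintro _ (h | ⟨i, rfl⟩)
    · exact Subfield.subset_closure (Or.inl h)
    · exact hyk i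
  rw [eq_top_iff]
  rintro w -
  have hw : w ∈ Submodule.span k (Set.range fun i => IsLocalRing.residue O (β i)) := by
    rw [hβ]; trivial
  induction hw using Submodule.span_induction with
  | mem w h => obtain ⟨i, rfl⟩ := h; exact hβk i
  | zero => exact zero_mem _
  | add a b _ _ ha hb => exact add_mem ha hb
  | smul a b _ hb => exact mul_mem (hkk a.2) hb

end Aux3
end LocalUnif

open LocalUnif in
/-- Corollary 2.3 of the paper. Let `(L|K, P)` be an extension of
valued fields of finite transcendence degree `d`. Then
`trdeg L|K ≥ trdeg LP|KP + dim_ℚ (ℚ ⊗ (v_P L / v_P K))` (any family of elements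
with rationally independent values modulo `v_P K` together with any family of
elements with residues algebraically independent over `KP` has size at most `d`).
If moreover `L|K` is finitely generated and equality holds, then `v_P L / v_P K`
and `LP|KP` are finitely generated; in particular, if `P` is trivial on `K`, then
`v_P L` is a finitely generated free abelian group. -/
theorem statement_9
    (L : Type*) [Field L] (K : Subfield L) (O : ValuationSubring L)
    (d : ℕ) (hd : TrdegEq K d) :
    -- the inequality (2) of the paper
    (∀ (ρ τ : ℕ) (x : Fin ρ → L) (y : Fin τ → L),
       ValIndepMod O K x → ResIndep O K y → ρ + τ ≤ d) ∧
    -- finite generation in case of equality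
    ((∃ S : Finset L, IntermediateField.adjoin ↥K (S : Set L) = ⊤) →
     (∃ (ρ τ : ℕ) (x : Fin ρ → L) (y : Fin τ → L),
        d = ρ + τ ∧ ValIndepMod O K x ∧ ResIndep O K y) →
     -- `v_P L / v_P K` is finitely generated
     ((∃ (N : ℕ) (a : Fin N → L), (∀ i, a i ≠ 0) ∧
        ∀ z : L, z ≠ 0 → ∃ (e : Fin N → ℤ) (c : L), c ∈ K ∧ c ≠ 0 ∧
          IsVUnit O (z / ((∏ i, a i ^ e i) * c))) ∧
     -- `LP | KP` is finitely generated
     (∃ (M : ℕ) (b : Fin M → L), (∀ i, b i ∈ O) ∧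
        ∀ z ∈ O, ∃ p q : MvPolynomial (Fin M) L,
          (∀ mo, p.coeff mo ∈ K ∧ p.coeff mo ∈ O) ∧
          (∀ mo, q.coeff mo ∈ K ∧ q.coeff mo ∈ O) ∧
          ¬ InMax O (MvPolynomial.eval b q) ∧
          InMax O (z * MvPolynomial.eval b q - MvPolynomial.eval b p)) ∧
     -- in particular, if `P` is trivial on `K`, then `v_P L` is free abelian of
     -- finite rank and `LP` is a function field over `K`
     (TrivialOn O K →
       (∃ (N : ℕ) (a : Fin N → L), (∀ i, a i ≠ 0) ∧
          (∀ z : L, z ≠ 0 → ∃ e : Fin N → ℤ, IsVUnit O (z / ∏ i, a i ^ e i)) ∧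
          ∀ e : Fin N → ℤ, IsVUnit O (∏ i, a i ^ e i) → e = 0) ∧
       (∃ (M : ℕ) (b : Fin M → L), (∀ i, b i ∈ O) ∧
        ∀ z ∈ O, ∃ p q : MvPolynomial (Fin M) L,
          (∀ mo, p.coeff mo ∈ K) ∧ (∀ mo, q.coeff mo ∈ K) ∧
          ¬ InMax O (MvPolynomial.eval b q) ∧
          InMax O (z * MvPolynomial.eval b q - MvPolynomial.eval b p))))) := by
  refine ⟨fun ρ τ x y hx hy => trdeg_le hd hx hy, ?_⟩
  rintro hfg ⟨ρ, τ, x, y, rfl, hx, hy⟩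
  have hfin := finite_ext hd hx hy hfg
  have h1 := value_fg hx.1 (IntermediateField.adjoin K (Set.range (Sum.elim x y)))
    (fun z hz hz0 => nice_field hx hy goodRing_self hy.1 z hz hz0)
  have h2 := residue_part hx hy
  refine ⟨h1, h2, fun hT => ⟨?_, ?_⟩⟩
  · obtain ⟨N, a, ha, h⟩ := h1
    exact value_free hT ha h
  · obtain ⟨M, b, hb, h⟩ := h2
    refine ⟨M, b, hb, fun z hz => ?_⟩
    obtain ⟨p, q, hp, hq, h3, h4⟩ := h z hz
    exact ⟨p, q, fun mo => (hp mo).1, fun mo => (hq mo).1, h3, h4⟩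
end

section
/- Let L|K be a field extension and P a valuation on L which is trivial on K (so the residue map embeds K into the residue field LP). If the extension LP|K (via this embedding) is separable, then L|K is a separable field extension. -/
section Aux
open IntermediateField

section
variable {k E : Type*} [Field k] [Field E] [Algebra k E] (p : ℕ)

lemma exists_functional {ι : Type*} {v : ι → E} (hv : LinearIndependent k v) (f : ι → k) :
    ∃ g : E →ₗ[k] k, ∀ i, g (v i) = f i := by
  obtain ⟨h, hh⟩ := LinearMap.exists_leftInverse_of_injective
    (Finsupp.linearCombination k v) (LinearMap.ker_eq_bot.mpr hv)
  refine ⟨(Finsupp.linearCombination k f) ∘ₗ h, fun i => ?_⟩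
  have := LinearMap.congr_fun hh (Finsupp.single i 1)
  simp at this
  simp [this]

lemma pow_indep_of_span [ExpChar k p] {ι ι' : Type*} {t : ι → E}
    (ht : LinearIndependent k (fun i => t i ^ p)) {s : ι' → E} (hs : LinearIndependent k s)
    (hst : ∀ i, s i ∈ Submodule.span k (Set.range t)) :
    LinearIndependent k (fun i => s i ^ p) := by
  classical
  have : ExpChar E p := expChar_of_injective_algebraMap (algebraMap k E).injective p
  rw [linearIndependent_iff']
  intro S c hc j hj
  obtain ⟨g, hg⟩ := exists_functional hs (fun i => if i = j then 1 else 0)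
  obtain ⟨G, hG⟩ := exists_functional ht (fun i => g (t i) ^ p)
  have key : ∀ y ∈ Submodule.span k (Set.range t), G (y ^ p) = g y ^ p := by
    intro y hy
    induction hy using Submodule.span_induction with
    | mem x hx => obtain ⟨i, rfl⟩ := hx; exact hG i
    | zero => simp [(expChar_pos k p).ne']
    | add x y _ _ hx hy => rw [add_pow_expChar, map_add, map_add, add_pow_expChar, hx, hy]
    | smul a x _ hx => rw [smul_pow, map_smul, map_smul, hx, smul_eq_mul, smul_eq_mul, mul_pow]
  have h2 := congrArg G hc
  have hp0 : p ≠ 0 := (expChar_pos k p).ne'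
  simpa [map_sum, key _ (hst _), hg, ite_pow, hp0, hj] using h2

lemma pow_indep_of_separable (hp : p.Prime) [ExpChar k p] {d : ℕ} {u : Fin d → E}
    (hu : AlgebraicIndependent k u) {ι : Type*} [Finite ι] {s : ι → E}
    (hs : LinearIndependent k s)
    (hsep : ∀ i, IsSeparable (adjoin k (Set.range u)) (s i)) :
    LinearIndependent k (fun i => s i ^ p) := by
  classical
  set M := adjoin k (Set.range u) with hM
  have : ExpChar M p := expChar_of_injective_algebraMap (algebraMap k M).injective p
  obtain ⟨b, hbs, hspan, hb⟩ := exists_linearIndependent M (Set.range s)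
  have hbp : LinearIndependent M (fun x : b => (x : E) ^ p) := by
    have := LinearIndependent.map_pow_expChar_pow_of_isSeparable' p 1 (v := fun x : b => (x : E))
      (fun x => by obtain ⟨i, hi⟩ := hbs x.2; rw [← hi]; exact hsep i) hb
    simpa using this
  have hbf : Finite b := (Set.finite_range s).subset hbs
  have : Fintype b := Fintype.ofFinite b
  have hmem : ∀ i, ∃ m : b → M, ∑ x, m x • (x : E) = s i := by
    intro i
    have : s i ∈ Submodule.span M (Set.range (fun x : b => (x : E))) := by
      rw [Subtype.range_coe, hspan]; exact Submodule.subset_span ⟨i, rfl⟩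
    exact (Submodule.mem_span_range_iff_exists_fun M).mp this
  choose m hm using hmem
  open scoped algebraAdjoinAdjoin in
  obtain ⟨⟨g, hg0⟩, hg⟩ := IsLocalization.exist_integer_multiples_of_finite
    (nonZeroDivisors (Algebra.adjoin k (Set.range u))) (S := M) (fun q : ι × b => m q.1 q.2)
  let g' : M := ⟨g, algebra_adjoin_le_adjoin _ _ g.2⟩
  have hg'0 : g' ≠ 0 := by
    have := nonZeroDivisors.ne_zero hg0
    intro h; apply this; exact Subtype.ext (congrArg (fun z : M => (z : E)) h)
  let u' : Fin d → M := fun i => ⟨u i, subset_adjoin _ _ ⟨i, rfl⟩⟩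
  have hu' : AlgebraicIndependent k u' :=
    (AlgHom.algebraicIndependent_iff M.val M.val.injective).mp hu
  have hmon : LinearIndependent k
      (fun e : Fin d →₀ ℕ => MvPolynomial.aeval u' (MvPolynomial.monomial e (1:k))) := by
    have := (MvPolynomial.basisMonomials (Fin d) k).linearIndependent.map'
      (MvPolynomial.aeval u').toLinearMap (LinearMap.ker_eq_bot.mpr hu')
    simpa [Function.comp_def] using this
  let T : (Fin d →₀ ℕ) → M := fun e => MvPolynomial.aeval u' (MvPolynomial.monomial e (1:k)) * g'⁻¹
  have hT : LinearIndependent k (fun e => T e ^ p) := by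
    have h1 := hmon.comp (fun e : Fin d →₀ ℕ => p • e) (fun a b h => by
      ext i
      have := DFunLike.congr_fun h i
      simpa [hp.ne_zero] using this)
    have h2 := h1.map' (LinearMap.mulRight k (g'⁻¹ ^ p)) (LinearMap.ker_eq_bot.mpr
      (mul_left_injective₀ (pow_ne_zero _ (inv_ne_zero hg'0))))
    refine cast ?_ h2
    congr 1
    funext e
    simp only [Function.comp, T, mul_pow, ← map_pow, MvPolynomial.monomial_pow, one_pow,
      LinearMap.mulRight_apply]
  have hTspan : ∀ q : ι × b, m q.1 q.2 ∈ Submodule.span k (Set.range T) := by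
    intro q
    obtain ⟨z, hz⟩ := hg q
    have hz' : (z : E) ∈ (MvPolynomial.aeval u : MvPolynomial (Fin d) k →ₐ[k] E).range := by
      rw [← Algebra.adjoin_range_eq_range_aeval]; exact z.2
    obtain ⟨P, hP⟩ := hz'
    have e1 : m q.1 q.2 = MvPolynomial.aeval u' P * g'⁻¹ := by
      rw [eq_mul_inv_iff_mul_eq₀ hg'0]
      apply Subtype.ext
      have h3 : ((MvPolynomial.aeval u' P : M) : E) = MvPolynomial.aeval u P := by
        have := MvPolynomial.comp_aeval_apply (R := k) (f := u') M.val P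
        exact this
      rw [h3]
      refine Eq.trans ?_ hP.symm
      have := congrArg Subtype.val hz
      rw [mul_comm]
      exact this.symm
    rw [e1, P.as_sum, map_sum, Finset.sum_mul]
    refine Submodule.sum_mem _ fun e _ => ?_
    have : MvPolynomial.monomial e (P.coeff e) = P.coeff e • MvPolynomial.monomial e (1:k) := by
      simp [MvPolynomial.smul_monomial]
    rw [this, map_smul, smul_mul_assoc]
    exact Submodule.smul_mem _ _ (Submodule.subset_span ⟨e, rfl⟩)
  refine pow_indep_of_span p (t := fun q : (Fin d →₀ ℕ) × b => T q.1 • (q.2 : E)) ?_ hs ?_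
  · have := linearIndependent_smul hT hbp
    simpa only [smul_pow] using this
  · intro i
    rw [← hm]
    refine Submodule.sum_mem _ fun x _ => ?_
    have := hTspan (i, x)
    generalize m i x = mm at this
    induction this using Submodule.span_induction with
    | mem y hy => obtain ⟨e, rfl⟩ := hy; exact Submodule.subset_span ⟨(e, x), rfl⟩
    | zero => simp
    | add y z _ _ hy hz => rw [add_smul]; exact add_mem hy hz
    | smul a y _ hy => rw [smul_assoc]; exact Submodule.smul_mem _ _ hy
end

lemma exists_good {K L κ : Type*} [Field K] [Field L] [Field κ] [Algebra K L] [Algebra K κ]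
    (p : ℕ) (O : ValuationSubring L) [Algebra K O] [IsScalarTower K O L]
    (r : O →ₐ[K] κ)
    (H : ∀ (n : ℕ) (c : Fin n → κ), LinearIndependent K c → LinearIndependent K (fun i => c i ^ p))
    (hp0 : p ≠ 0) :
    ∀ (n : ℕ) (V : Submodule K L) [FiniteDimensional K V], Module.finrank K V = n →
      ∃ (ι : Type) (_ : Fintype ι) (t : ι → L), (∀ i, t i ∈ V) ∧
        V ≤ Submodule.span K (Set.range t) ∧ LinearIndependent K (fun i => t i ^ p) := by
  intro n
  induction n using Nat.strong_induction_on with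
  | _ n ih =>
  intro V _ hn
  by_cases hV : V = ⊥
  · subst hV
    exact ⟨PEmpty, inferInstance, PEmpty.elim, fun i => i.elim, bot_le, linearIndependent_empty_type⟩
  obtain ⟨S, hS⟩ : ∃ S : Finset L, Submodule.span K (S : Set L) = V :=
    (Submodule.fg_iff_finiteDimensional V).mpr inferInstance
  have hSne : S.Nonempty := by
    rw [Finset.nonempty_iff_ne_empty]; rintro rfl; simp at hS; exact hV hS.symm
  obtain ⟨x, hxS, hxmax⟩ := S.exists_max_image O.valuation hSne
  have hx0 : x ≠ 0 := by
    rintro rfl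
    apply hV
    rw [← hS, Submodule.span_eq_bot]
    intro y hy
    have := hxmax y hy
    simpa using this
  have hxV : x ∈ V := hS ▸ Submodule.subset_span hxS
  have hKO : ∀ a : K, algebraMap K L a ∈ O := fun a => by
    rw [IsScalarTower.algebraMap_apply K O L]; exact (algebraMap K O a).2
  have hdiv : ∀ y ∈ V, y / x ∈ O := by
    intro y hy
    rw [← hS] at hy
    induction hy using Submodule.span_induction with
    | mem y hy =>
      rw [← O.valuation_le_one_iff, map_div₀]
      exact div_le_one_of_le₀ (hxmax y hy) zero_le
    | zero => simp
    | add y z _ _ hy hz => rw [add_div]; exact add_mem hy hz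
    | smul a y _ hy => rw [Algebra.smul_def, mul_div_assoc]; exact mul_mem (hKO a) hy
  have hsm : ∀ (a : K) (z : O), ((a • z : O) : L) = a • (z : L) := fun a z => by
    rw [Algebra.smul_def, Algebra.smul_def, IsScalarTower.algebraMap_apply K O L]; rfl
  let ψ : V →ₗ[K] O :=
    { toFun := fun y => ⟨y / x, hdiv y y.2⟩
      map_add' := fun y z => Subtype.ext (by simp [add_div])
      map_smul' := fun a y => Subtype.ext (by
        rw [RingHom.id_apply, hsm]; simp [smul_div_assoc]) }
  let φ : V →ₗ[K] κ := r.toLinearMap ∘ₗ ψ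
  have hφx : φ ⟨x, hxV⟩ = 1 := by
    have : ψ ⟨x, hxV⟩ = 1 := Subtype.ext (div_self hx0)
    simp [φ, this]
  have hker : LinearMap.ker φ < ⊤ := by
    rw [lt_top_iff_ne_top]
    intro h
    have : (⟨x, hxV⟩ : V) ∈ LinearMap.ker φ := h ▸ trivial
    rw [LinearMap.mem_ker, hφx] at this
    exact one_ne_zero this
  let V' := (LinearMap.ker φ).map V.subtype
  have hfin : Module.finrank K V' < n := by
    rw [← hn, LinearEquiv.finrank_eq (Submodule.equivSubtypeMap V (LinearMap.ker φ)).symm]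
    exact Submodule.finrank_lt hker.ne
  obtain ⟨ι, _, t, htV', hspan, ht⟩ := ih _ hfin V' rfl
  have htV : ∀ i, ∃ h : t i ∈ V, φ ⟨t i, h⟩ = 0 := fun i => by
    obtain ⟨y, hy, hyt⟩ := htV' i
    have : t i ∈ V := hyt ▸ y.2
    refine ⟨this, ?_⟩
    have e : (⟨t i, this⟩ : V) = y := Subtype.ext hyt.symm
    rw [e]; exact hy
  let c := Module.finBasis K (LinearMap.range φ)
  have hc : ∀ j, ∃ w : V, φ w = c j := fun j => (c j).2
  choose w hw using hc
  have hcI : LinearIndependent K (fun j => (c j : κ)) :=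
    c.linearIndependent.map' (Submodule.subtype _) (Submodule.ker_subtype _)
  have hcp := H _ _ hcI
  refine ⟨ι ⊕ Fin (Module.finrank K (LinearMap.range φ)), inferInstance,
    Sum.elim t (fun j => (w j : L)), ?_, ?_, ?_⟩
  · rintro (i | j)
    · exact (htV i).1
    · exact (w j).2
  · intro y hy
    have hrepr := c.sum_repr ⟨φ ⟨y, hy⟩, ⟨_, rfl⟩⟩
    set a := c.repr ⟨φ ⟨y, hy⟩, ⟨_, rfl⟩⟩
    have h1 : (⟨y, hy⟩ - ∑ j, a j • w j : V) ∈ LinearMap.ker φ := by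
      rw [LinearMap.mem_ker, map_sub, map_sum, sub_eq_zero]
      have := congrArg Subtype.val hrepr
      simp only [map_smul, hw]
      exact this.symm.trans (by simp)
    have h2 : y - ∑ j, a j • (w j : L) ∈ V' := ⟨_, h1, by simp⟩
    have h3 : y = (y - ∑ j, a j • (w j : L)) + ∑ j, a j • (w j : L) := by ring
    rw [h3, Set.Sum.elim_range]
    refine add_mem (Submodule.span_mono Set.subset_union_left (hspan h2)) ?_
    refine Submodule.sum_mem _ fun j _ => Submodule.smul_mem _ _ (Submodule.subset_span (Or.inr ⟨j, rfl⟩))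
  · rw [Fintype.linearIndependent_iff]
    intro a ha
    rw [Fintype.sum_sum_type] at ha
    simp only [Sum.elim_inl, Sum.elim_inr] at ha
    have hO : ∑ i, a (.inl i) • (ψ ⟨t i, (htV i).1⟩) ^ p + ∑ j, a (.inr j) • ψ (w j) ^ p = 0 := by
      apply Subtype.ext
      have e : ∀ (b : K) (y : V), ((b • ψ y ^ p : O) : L) = (b • (y : L) ^ p) / x ^ p := by
        intro b y
        rw [hsm, smul_div_assoc, ← div_pow]; rfl
      push_cast
      simp only [e]
      rw [← Finset.sum_div, ← Finset.sum_div, ← add_div, ha]; simp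
    have hr := congrArg r hO
    have e1 : ∀ i, r (ψ ⟨t i, (htV i).1⟩) = 0 := fun i => (htV i).2
    have e2 : ∀ j, r (ψ (w j)) = c j := hw
    simp only [map_add, map_sum, map_smul, map_pow, e1, e2, map_zero, zero_pow hp0, smul_zero,
      Finset.sum_const_zero, zero_add] at hr
    have hd := Fintype.linearIndependent_iff.mp hcp _ hr
    simp only [hd, zero_smul, Finset.sum_const_zero, add_zero] at ha
    have hd' := Fintype.linearIndependent_iff.mp ht _ ha
    rintro (i | j)
    exacts [hd' i, hd j]

lemma sep_aux (L : Type*) [Field L] (K : Subfield L) (S : Finset L)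
    (E : IntermediateField K L) (hSE : (S : Set L) ⊆ E)
    (h : ∃ s : Finset E, IsTranscendenceBasis K ((↑) : s → E) ∧
      Algebra.IsSeparable (adjoin K (s : Set E)) E) :
    ∃ (d : ℕ) (u : Fin d → L), (∀ i, u i ∈ (⊤ : Subfield L)) ∧ AlgebraicIndependent ↥K u ∧
      ∀ x ∈ Subfield.closure ((K : Set L) ∪ ↑S),
        IsSeparable ↥(IntermediateField.adjoin ↥K (Set.range u)) x := by
  obtain ⟨s, hs, hsep⟩ := h
  let u : Fin s.card → L := fun i => ((s.equivFin.symm i : E) : L)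
  refine ⟨s.card, u, fun _ => trivial, ?_, ?_⟩
  · have h1 : AlgebraicIndependent K (fun i => ((s.equivFin.symm i : E))) :=
      hs.1.comp (fun i => s.equivFin.symm i) s.equivFin.symm.injective
    exact (AlgHom.algebraicIndependent_iff E.val E.val.injective).mpr h1
  · intro x hx
    have hxE : x ∈ E := by
      have : Subfield.closure ((K : Set L) ∪ ↑S) ≤ E.toSubfield := by
        rw [Subfield.closure_le]
        rintro y (hy | hy)
        · exact E.algebraMap_mem ⟨y, hy⟩
        · exact hSE hy
      exact this hx
    set B := adjoin K (s : Set E)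
    set C := adjoin K (Set.range u)
    have hBC : ∀ y : B, ((y : E) : L) ∈ C := by
      intro y
      have h1 : ((y : E) : L) ∈ B.map E.val := ⟨y, y.2, rfl⟩
      have h2 : B.map E.val = C := by
        rw [adjoin_map]
        congr 1
        ext z
        constructor
        · rintro ⟨w, hw, rfl⟩
          exact ⟨s.equivFin ⟨w, hw⟩, by simp [u]⟩
        · rintro ⟨i, rfl⟩
          exact ⟨_, (s.equivFin.symm i).2, rfl⟩
      rw [← h2]; exact h1
    let f : B →+* C := ((algebraMap E L).comp (algebraMap B E)).codRestrict C hBC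
    have hm := (hsep.isSeparable' ⟨x, hxE⟩ : (minpoly B (⟨x, hxE⟩ : E)).Separable)
    refine Polynomial.Separable.of_dvd (Polynomial.Separable.map (f := f) hm) (minpoly.dvd _ _ ?_)
    have h0 := congrArg (algebraMap E L) (minpoly.aeval B (⟨x, hxE⟩ : E))
    rw [Polynomial.aeval_def, Polynomial.hom_eval₂, map_zero] at h0
    rw [Polynomial.aeval_def, Polynomial.eval₂_map]
    exact h0

end Aux

open LocalUnif in
/-- Lemma 2.6 of the paper. Let `L|K` be a field extension and
`P` a valuation on `L` which is trivial on `K`, so that the residue map embeds `K`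
into the residue field `LP`. If `LP|K` is separable (in the general sense of
MacLane: every finitely generated subextension is separably generated), then `L|K`
is separable. -/
theorem statement_17
    (L : Type*) [Field L] (K : Subfield L) (O : ValuationSubring L)
    (htriv : TrivialOn O K)
    (hsep : IsSeparableExt
      (F := IsLocalRing.ResidueField ↥O)
      (RingHom.fieldRange (resEmb O K fun x hx => (htriv x hx).1)) ⊤) :
    IsSeparableExt K ⊤ := by
  intro S _
  apply sep_aux L K S (IntermediateField.adjoin K (S : Set L)) (IntermediateField.subset_adjoin _ _)
  set E := IntermediateField.adjoin K (S : Set L) with hE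
  have hfg : Algebra.EssFiniteType K E :=
    IntermediateField.essFiniteType_iff.mpr ⟨S, rfl⟩
  obtain h0 | ⟨p, hp, hpk⟩ := CharP.exists' K
  · exact exists_isTranscendenceBasis_and_isSeparable_of_perfectField K E
  have : ExpChar K p := .prime hp.out
  refine exists_isTranscendenceBasis_and_isSeparable_of_linearIndepOn_pow_of_essFiniteType
    p hp.out fun s hs => ?_
  let j : K →+* O :=
    { toFun := fun x => (⟨x.1, (htriv x.1 x.2).1⟩ : ↥O)
      map_one' := rfl
      map_mul' := fun _ _ => rfl
      map_zero' := rfl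
      map_add' := fun _ _ => rfl }
  let ρ := resEmb O K fun x hx => (htriv x hx).1
  let _ : Algebra K O := j.toAlgebra
  have : IsScalarTower K O L := .of_algebraMap_eq fun _ => rfl
  let r : O →ₐ[K] IsLocalRing.ResidueField O :=
    { IsLocalRing.residue O with commutes' := fun _ => rfl }
  have : ExpChar ρ.fieldRange p :=
    expChar_of_injective_ringHom (f := ρ.rangeRestrictField) (RingHom.injective _) p
  have H : ∀ (n : ℕ) (c : Fin n → IsLocalRing.ResidueField O),
      LinearIndependent K c → LinearIndependent K (fun i => c i ^ p) := by
    intro n c hc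
    classical
    have hc' : LinearIndependent ρ.fieldRange c := by
      rw [Fintype.linearIndependent_iff] at hc ⊢
      intro g hg i
      have h1 : ∀ i, ∃ a : K, ρ a = g i := fun i => (g i).2
      choose a ha using h1
      have := hc a (by
        rw [← hg]
        refine Finset.sum_congr rfl fun i _ => ?_
        rw [Algebra.smul_def, Algebra.smul_def]
        exact congrArg (· * c i) (ha i)) i
      apply Subtype.ext
      rw [← ha i, this, map_zero]; rfl
    obtain ⟨d, u, -, hu, hus⟩ := hsep (Finset.univ.image c) (fun _ _ => trivial)
    have h2 := pow_indep_of_separable p hp.out hu hc' (fun i => hus _ (Subfield.subset_closure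
      (Or.inr (by simp))))
    rw [Fintype.linearIndependent_iff] at h2 ⊢
    intro g hg i
    have := h2 (fun i => ρ.rangeRestrictField (g i)) (by
        rw [← hg]
        refine Finset.sum_congr rfl fun i _ => ?_
        rw [Algebra.smul_def, Algebra.smul_def]
        rfl) i
    exact (map_eq_zero _).mp this
  have hs' : LinearIndependent K (fun x : s => ((x : E) : L)) :=
    LinearIndependent.map' hs E.val.toLinearMap (LinearMap.ker_eq_bot.mpr E.val.injective)
  have : FiniteDimensional K (Submodule.span K (Set.range (fun x : s => ((x : E) : L)))) :=
    FiniteDimensional.span_of_finite K (Set.finite_range _)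
  obtain ⟨ι, _, t, -, hspan, ht⟩ := exists_good p O r H hp.out.ne_zero _
    (Submodule.span K (Set.range (fun x : s => ((x : E) : L)))) rfl
  have hfin := pow_indep_of_span p ht hs' (fun i => hspan (Submodule.subset_span ⟨i, rfl⟩))
  exact LinearIndependent.of_comp E.val.toLinearMap hfin
end
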